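/- Let Ω be a bounded open convex set in ℝ² containing the origin in its interior, and suppose that sup_{θ∈S¹} sup_{δ>0} δ^{-1/2} μ(θ,δ) < ∞. Then there is a constant C_Ω such that for all R ≥ 2 and all h with 1 ≤ h ≤ R one has 𝒢_Ω(R,h) ≤ C_Ω (R log R)^{1/2}. -/

import Mathlib

/-!
Smoothing and Poisson summation.  Convolving the indicator function of `tΩ` with a Fejér-type
kernel at scale `ε ~ 1/R`, and comparing with the slightly dilated domains `(t ± ε/r)Ω`, bounds
`|E_Ω(t)|` by smoothed exponential sums `t² ∑_{k ≠ 0} p_ε(k) χ̂(tk)` up to a bounded error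
(`Body.rest_le`).  Here `χ̂` is the Fourier transform of the indicator function of `Ω`, and the
weights `p_ε(k)` are at most `min (1, (1/(ε|k|))²)`.

Along the direction `u` of `k`, Fubini turns `χ̂(tk)` into the Fourier transform at frequency
`t|k|` of the chord-length function `f` of `Ω` (`Dom.FI_eq`).  This function is supported on an interval
`[α, β]`, is concave there, and the curvature hypothesis implies that it is `O(√(s - α))` and
`O(√(β - s))` at the endpoints (`Dom.sliceFn_chord`).  No smoothness is available, so the decay is
extracted from the second difference `2 f(s) - f(s - η) - f(s + η)` with `η ~ 1/(R|k|)`: it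
multiplies the transform by `4 sin²(πt|k|η)`, which is bounded below for `t` comparable to `R`.
Concavity lets its `L¹` norm be computed by telescoping: it is `O(η^{3/2})` within distance
`d ~ 1/|k|` of the endpoints and `O(η² d^{-1/2})` in the middle.

The endpoint parts are wave packets, superpositions of `e(tσ)` with `σ` at bounded distance from
`ρ*(k)`, respectively `-ρ*(-k)`.  Over a window of length one two such packets have an inner product
decaying like `(1 + |ρ*(k) - ρ*(l)|)^{-4}` (`packet_sum`, by comparison with a Gaussian window).
As `ρ*` is comparable to a norm, at most `O(|k|)` lattice points `l` interact with a given
`k`, so the mean square of the endpoint parts is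
`O(R⁴ ∑ (R|k|)^{-3} |k| min (1, R²/|k|²)) = O(R log R)`.  The middle parts are summed trivially and
contribute `O(R^{1/2})` pointwise.  Covering `[R, R + h]` by windows of length one gives the claim.
-/

open MeasureTheory Set
open scoped Pointwise RealInnerProductSpace NNReal ENNReal

noncomputable section

abbrev E2 := EuclideanSpace ℝ (Fin 2)

/-- The embedding of an integer vector into the Euclidean plane. -/
def ek (k : Fin 2 → ℤ) : E2 := (WithLp.equiv 2 (Fin 2 → ℝ)).symm fun i => (k i : ℝ)

/-- Number of lattice points in a set. -/
def latticeCount (S : Set E2) : ℕ := Nat.card {k : Fin 2 → ℤ | ek k ∈ S}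

/-- The lattice rest `E_Ω(t) = card(tΩ ∩ ℤ²) − t²·area(Ω)`. -/
def latticeRest (Ω : Set E2) (t : ℝ) : ℝ :=
  (latticeCount (t • Ω) : ℝ) - t ^ 2 * (volume Ω).toReal

/-- The mean square discrepancy `𝒢_Ω(R,h) = ((1/h)∫_R^{R+h} |E_Ω(t)|² dt)^{1/2}`. -/
def meanSquare (Ω : Set E2) (R h : ℝ) : ℝ :=
  Real.sqrt ((1 / h) * ∫ t in R..(R + h), (latticeRest Ω t) ^ 2)

/-- The support function `ρ*(ξ) = sup {⟨x,ξ⟩ : x ∈ Ω}`. -/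
def suppFn (Ω : Set E2) (ξ : E2) : ℝ := sSup ((fun x => ⟪x, ξ⟫) '' Ω)

/-- `μ(θ,δ)`, the diameter of the cap `𝒞(θ,δ) = {x ∈ ∂Ω : ⟨x,θ⟩ ≥ ρ*(θ) − δ}`. -/
def capDiam (Ω : Set E2) (θ : E2) (δ : ℝ) : ℝ :=
  Metric.diam {x ∈ frontier Ω | suppFn Ω θ - δ ≤ ⟪x, θ⟫}

/-- Curvature bounded below in the generalized sense:
`sup_{θ∈S¹} sup_{δ>0} δ^{-1/2} μ(θ,δ) < ∞`. -/
def CurvBddBelow (Ω : Set E2) : Prop :=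
  ∃ K : ℝ, ∀ θ : E2, ‖θ‖ = 1 → ∀ δ : ℝ, 0 < δ → capDiam Ω θ δ ≤ K * Real.sqrt δ

/-! ### Second differences of chord-length functions -/

/-- The additive character `e(x) = exp (2πix)`. -/
def ee (x : ℝ) : ℂ := Complex.exp (((2 * Real.pi * x : ℝ) : ℂ) * Complex.I)

lemma norm_ee (x : ℝ) : ‖ee x‖ = 1 := Complex.norm_exp_ofReal_mul_I _

lemma ee_add (x y : ℝ) : ee (x + y) = ee x * ee y := by
  unfold ee; rw [← Complex.exp_add]; congr 1; push_cast; ring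

lemma ee_zero : ee 0 = 1 := by simp [ee]

lemma continuous_ee : Continuous ee := by unfold ee; fun_prop

lemma two_sub_ee (x : ℝ) : 2 - ee x - ee (-x) = ((4 * Real.sin (Real.pi * x) ^ 2 : ℝ) : ℂ) := by
  unfold ee
  have h1 : Real.cos (2 * Real.pi * x) = 1 - 2 * Real.sin (Real.pi * x) ^ 2 := by
    rw [show 2 * Real.pi * x = 2 * (Real.pi * x) by ring, Real.cos_two_mul]
    have := Real.sin_sq_add_cos_sq (Real.pi * x)
    linarith
  have h2 : 2 * Complex.cos ((2 * Real.pi * x : ℝ) : ℂ)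
      = Complex.exp (((2 * Real.pi * x : ℝ) : ℂ) * Complex.I)
        + Complex.exp (((2 * Real.pi * (-x) : ℝ) : ℂ) * Complex.I) := by
    rw [Complex.two_cos]; congr 2; push_cast; ring
  rw [sub_sub, ← h2, ← Complex.ofReal_cos, h1]; push_cast; ring

/-- The properties of the chord-length function of a planar convex body with curvature bounded
below that are used: it is concave on its interval of support `(α, β)` and vanishes at both ends
at least as fast as a square root.  (`Real.sqrt` being `0` on negative numbers, the two upper
bounds force `f = 0` outside `(α, β)`.) -/
structure SliceFn (f : ℝ → ℝ) (α β K : ℝ) : Prop where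
  lt : α < β
  K_nonneg : 0 ≤ K
  nonneg : ∀ s, 0 ≤ f s
  meas : Measurable f
  left : ∀ s, f s ≤ K * √(s - α)
  right : ∀ s, f s ≤ K * √(β - s)
  conc : ConcaveOn ℝ (Ioo α β) f

namespace SliceFn
variable {f : ℝ → ℝ} {α β K : ℝ}

lemma reflect (h : SliceFn f α β K) : SliceFn (fun s => f (-s)) (-β) (-α) K where
  lt := by linarith [h.lt]
  K_nonneg := h.K_nonneg
  nonneg s := h.nonneg _
  meas := h.meas.comp measurable_neg
  left s := by have := h.right (-s); rwa [show β - -s = s - -β by ring] at this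
  right s := by have := h.left (-s); rwa [show -s - α = -α - s by ring] at this
  conc := by
    refine ⟨convex_Ioo _ _, fun x hx y hy a b ha hb hab => ?_⟩
    have := h.conc.2 (x := -x) (y := -y) ⟨by linarith [hx.2], by linarith [hx.1]⟩
      ⟨by linarith [hy.2], by linarith [hy.1]⟩ ha hb hab
    simp only [smul_eq_mul] at this ⊢
    rwa [show -(a * x + b * y) = a * -x + b * -y by ring]

lemma zero_of_ge (h : SliceFn f α β K) {s : ℝ} (hs : β ≤ s) : f s = 0 := by
  have := h.right s
  rw [Real.sqrt_eq_zero_of_nonpos (by linarith)] at this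
  linarith [h.nonneg s]

lemma zero_of_le (h : SliceFn f α β K) {s : ℝ} (hs : s ≤ α) : f s = 0 := by
  have := h.left s
  rw [Real.sqrt_eq_zero_of_nonpos (by linarith)] at this
  linarith [h.nonneg s]

lemma integrable (h : SliceFn f α β K) : Integrable f := by
  have : IntegrableOn f (Icc α β) := by
    refine Measure.integrableOn_of_bounded (M := K * √(β - α)) (by simp)
      h.meas.aestronglyMeasurable ?_
    filter_upwards [ae_restrict_mem measurableSet_Icc] with s hs
    rw [Real.norm_of_nonneg (h.nonneg s)]
    exact (h.right s).trans (by gcongr; exact h.K_nonneg; exact hs.1)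
  refine (integrableOn_iff_integrable_of_support_subset ?_).1 this
  intro s hs
  by_contra hc
  rw [mem_Icc, not_and_or, not_le, not_le] at hc
  rcases hc with hc | hc
  · exact hs (h.zero_of_le hc.le)
  · exact hs (h.zero_of_ge hc.le)

lemma conc_le (h : SliceFn f α β K) {x y : ℝ} (hx : x ∈ Ioo α β) (hy : y ∈ Ioo α β) (a b : ℝ)
    (ha : 0 ≤ a) (hb : 0 ≤ b) (hab : a + b = 1) : a * f x + b * f y ≤ f (a * x + b * y) :=
  h.conc.2 hx hy ha hb hab

/-- Backward difference quotients are controlled from above at distance `d` from the left end: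
compare slopes of the concave `f` over `[s - η, s]` and over `[(s + α) / 2, s]`. -/
lemma diff_le (h : SliceFn f α β K) {η d s : ℝ} (hη : 0 < η) (hd : 2 * η ≤ d) (hs : d ≤ s - α) :
    f s - f (s - η) ≤ 2 * η * K / √d := by
  have hK := h.K_nonneg
  have hd0 : 0 < d := by linarith
  rcases le_or_gt β s with hb | hb
  · rw [h.zero_of_ge hb]
    have := h.nonneg (s - η)
    have : 0 ≤ 2 * η * K / √d := by positivity
    linarith
  set D := s - α with hD
  have hD0 : 0 < D := by linarith
  have h1 := h.conc_le (x := s - D / 2) (y := s) ⟨by linarith, by linarith⟩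
    ⟨by linarith, hb⟩ (2 * η / D) (1 - 2 * η / D) (by positivity)
    (by rw [sub_nonneg, div_le_one hD0]; linarith) (by ring)
  rw [show 2 * η / D * (s - D / 2) + (1 - 2 * η / D) * s = s - η by field_simp; ring] at h1
  have h2 : 0 ≤ 2 * η / D * f (s - D / 2) := mul_nonneg (by positivity) (h.nonneg _)
  calc f s - f (s - η) ≤ 2 * η / D * f s := by linarith
    _ ≤ 2 * η / D * (K * √D) := by gcongr; exact h.left s
    _ = 2 * η * K / √D := by
        have : √D ≠ 0 := (Real.sqrt_pos.2 hD0).ne'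
        have h3 : √D ^ 2 = D := Real.sq_sqrt hD0.le
        field_simp; rw [h3, mul_comm]
    _ ≤ 2 * η * K / √d := by gcongr

end SliceFn

/-- Centred second difference (with reversed sign). -/
def secDiff (f : ℝ → ℝ) (η s : ℝ) : ℝ := 2 * f s - f (s - η) - f (s + η)

namespace SliceFn
variable {f : ℝ → ℝ} {α β K : ℝ}

lemma secDiff_nonneg (h : SliceFn f α β K) {η s : ℝ} (hη : 0 < η) (h1 : α < s - η)
    (h2 : s + η < β) : 0 ≤ secDiff f η s := by
  have := h.conc_le (x := s - η) (y := s + η) ⟨h1, by linarith⟩ ⟨by linarith, h2⟩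
    (1 / 2) (1 / 2) (by norm_num) (by norm_num) (by norm_num)
  rw [show 1 / 2 * (s - η) + 1 / 2 * (s + η) = s by ring] at this
  unfold secDiff; linarith

lemma secDiff_integrable (h : SliceFn f α β K) (η : ℝ) : Integrable (secDiff f η) := by
  have := h.integrable
  exact ((this.const_mul 2).sub (this.comp_sub_right η)).sub (this.comp_add_right η)

lemma secDiff_zero_right (h : SliceFn f α β K) {η s : ℝ} (hη : 0 < η) (hs : β + η ≤ s) :
    secDiff f η s = 0 := by
  unfold secDiff
  rw [h.zero_of_ge (by linarith), h.zero_of_ge (by linarith), h.zero_of_ge (by linarith)]; ring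

lemma secDiff_zero_left (h : SliceFn f α β K) {η s : ℝ} (hη : 0 < η) (hs : s ≤ α - η) :
    secDiff f η s = 0 := by
  unfold secDiff
  rw [h.zero_of_le (by linarith), h.zero_of_le (by linarith), h.zero_of_le (by linarith)]; ring

/-- Integrating a second difference telescopes. -/
lemma integral_secDiff (h : SliceFn f α β K) (η a b : ℝ) :
    ∫ s in a..b, secDiff f η s =
      (∫ s in a..(a + η), (f s - f (s - η))) + ∫ s in b..(b + η), (f (s - η) - f s) := by
  have hi : ∀ x y, IntervalIntegrable f volume x y := fun x y => h.integrable.intervalIntegrable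
  have hi1 : ∀ x y, IntervalIntegrable (fun s => f (s - η)) volume x y :=
    fun x y => (h.integrable.comp_sub_right η).intervalIntegrable
  have hi2 : ∀ x y, IntervalIntegrable (fun s => f (s + η)) volume x y :=
    fun x y => (h.integrable.comp_add_right η).intervalIntegrable
  unfold secDiff
  rw [intervalIntegral.integral_sub (((hi a b).const_mul 2).sub (hi1 a b)) (hi2 a b),
    intervalIntegral.integral_sub ((hi a b).const_mul 2) (hi1 a b),
    intervalIntegral.integral_sub (hi _ _) (hi1 _ _),
    intervalIntegral.integral_sub (hi1 _ _) (hi _ _)]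
  simp only [intervalIntegral.integral_comp_sub_right (fun s => f s),
    intervalIntegral.integral_comp_add_right (fun s => f s), intervalIntegral.integral_const_mul,
    add_sub_cancel_right]
  have e1 := intervalIntegral.integral_add_adjacent_intervals (hi (a - η) a) (hi a b)
  have e2 := intervalIntegral.integral_add_adjacent_intervals (hi (a - η) (b - η)) (hi (b - η) b)
  have e3 := intervalIntegral.integral_add_adjacent_intervals (hi a b) (hi b (b + η))
  have e4 := intervalIntegral.integral_add_adjacent_intervals (hi a (a + η)) (hi (a + η) (b + η))
  linarith

lemma integral_le_of_le {g : ℝ → ℝ} {a η C : ℝ} (hg : Integrable g) (hη : 0 ≤ η)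
    (h : ∀ s ∈ Icc a (a + η), g s ≤ C) : ∫ s in a..(a + η), g s ≤ η * C := by
  have := intervalIntegral.integral_mono_on (f := g) (g := fun _ => C) (by linarith)
    hg.intervalIntegrable intervalIntegrable_const h
  simpa using this

lemma diff_integrable (h : SliceFn f α β K) (η : ℝ) : Integrable (fun s => f s - f (s - η)) :=
  h.integrable.sub (h.integrable.comp_sub_right η)

lemma diff_integrable' (h : SliceFn f α β K) (η : ℝ) : Integrable (fun s => f (s - η) - f s) :=
  (h.integrable.comp_sub_right η).sub h.integrable

lemma integral_abs_secDiff (h : SliceFn f α β K) {η a b : ℝ} (hη : 0 < η) (hab : a ≤ b)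
    (h1 : α + η ≤ a) (h2 : b ≤ β - η) :
    ∫ s in a..b, |secDiff f η s| = ∫ s in a..b, secDiff f η s := by
  apply intervalIntegral.integral_congr_Ioo_of_le hab
  intro s hs
  exact abs_of_nonneg (h.secDiff_nonneg hη (by linarith [hs.1]) (by linarith [hs.2]))

lemma far (h : SliceFn f α β K) {η d : ℝ} (hη : 0 < η) (hd : 2 * η ≤ d) (hd2 : 2 * d ≤ β - α) :
    ∫ s in Icc (α + d) (β - d), |secDiff f η s| ≤ 4 * K * η ^ 2 / √d := by
  rw [integral_Icc_eq_integral_Ioc, ← intervalIntegral.integral_of_le (by linarith),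
    h.integral_abs_secDiff hη (by linarith) (by linarith) (by linarith), h.integral_secDiff]
  have e1 := integral_le_of_le (a := α + d) (h.diff_integrable η) hη.le
    (fun s hs => h.diff_le (s := s) hη hd (by linarith [hs.1]))
  have e2 := integral_le_of_le (a := β - d) (C := 2 * η * K / √d) (h.diff_integrable' η) hη.le
    (fun s hs => by
      have := h.reflect.diff_le (s := -s + η) hη hd (by linarith [hs.2])
      simpa [sub_eq_add_neg, add_comm] using this)
  calc _ ≤ η * (2 * η * K / √d) + η * (2 * η * K / √d) := add_le_add e1 e2
    _ = _ := by ring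

lemma near_right (h : SliceFn f α β K) {η d : ℝ} (hη : 0 < η) (hd : 2 * η ≤ d)
    (hd2 : 2 * d ≤ β - α) :
    ∫ s in Ioi (β - d), |secDiff f η s| ≤ 20 * K * (η * √η) := by
  have hK := h.K_nonneg
  have hInt := (h.secDiff_integrable η).abs
  have e0 : ∫ s in Ioi (β - d), |secDiff f η s| = ∫ s in (β - d)..(β + η), |secDiff f η s| := by
    rw [intervalIntegral.integral_of_le (by linarith)]
    refine setIntegral_eq_of_subset_of_forall_sdiff_eq_zero measurableSet_Ioi
      (fun s hs => hs.1) ?_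
    intro s hs
    have : β + η ≤ s := by
      by_contra hc
      exact hs.2 ⟨hs.1, by linarith⟩
    rw [h.secDiff_zero_right hη this, abs_zero]
  have e1 := intervalIntegral.integral_add_adjacent_intervals
    (hInt.intervalIntegrable (a := β - d) (b := β - η))
    (hInt.intervalIntegrable (a := β - η) (b := β + η))
  have s2 : √(2 * η) ≤ 2 * √η := by
    rw [Real.sqrt_mul (by norm_num)]
    gcongr
    rw [Real.sqrt_le_left (by norm_num)]; norm_num
  have bd : ∀ x, β - x ≤ 2 * η → f x ≤ 2 * K * √η := fun x hx => by
    calc f x ≤ K * √(β - x) := h.right x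
      _ ≤ K * (2 * √η) := by gcongr; exact (Real.sqrt_le_sqrt hx).trans s2
      _ = _ := by ring
  have b2 : ∫ s in (β - η)..(β + η), |secDiff f η s| ≤ 16 * K * (η * √η) := by
    have := integral_le_of_le (a := β - η) (η := 2 * η) (C := 8 * K * √η) hInt (by linarith)
      (fun s hs => by
        have a1 := bd s (by linarith [hs.1])
        have a2 := bd (s - η) (by linarith [hs.1])
        have a3 := bd (s + η) (by linarith [hs.1])
        have := h.nonneg s; have := h.nonneg (s - η); have := h.nonneg (s + η)
        unfold secDiff
        rw [abs_le]; constructor <;> nlinarith)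
    rw [show β - η + 2 * η = β + η by ring] at this
    linarith
  have b1 : ∫ s in (β - d)..(β - η), |secDiff f η s| ≤ 4 * K * (η * √η) := by
    rw [h.integral_abs_secDiff hη (by linarith) (by linarith) le_rfl, h.integral_secDiff]
    have q1 := integral_le_of_le (a := β - d) (h.diff_integrable η) hη.le
      (fun s hs => h.diff_le (s := s) hη hd (by linarith [hs.1]))
    have q2 := integral_le_of_le (a := β - η) (C := 2 * K * √η) (h.diff_integrable' η) hη.le
      (fun s hs => by
        have := bd (s - η) (by linarith [hs.1])
        have := h.nonneg s
        linarith)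
    have q3 : 2 * η * K / √d ≤ 2 * K * √η := by
      have : 0 < √η := Real.sqrt_pos.2 hη
      calc 2 * η * K / √d ≤ 2 * η * K / √η := by gcongr; linarith
        _ = 2 * K * √η := by
          have h3 : √η ^ 2 = η := Real.sq_sqrt hη.le
          field_simp; rw [h3, mul_comm]
    calc _ ≤ η * (2 * η * K / √d) + η * (2 * K * √η) := add_le_add q1 q2
      _ ≤ η * (2 * K * √η) + η * (2 * K * √η) := by gcongr
      _ = _ := by ring
  rw [e0, ← e1]; linarith

lemma secDiff_reflect (η s : ℝ) : secDiff (fun s => f (-s)) η s = secDiff f η (-s) := by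
  simp only [secDiff]
  rw [show -(s - η) = -s + η by ring, show -(s + η) = -s - η by ring]; ring

lemma near_left (h : SliceFn f α β K) {η d : ℝ} (hη : 0 < η) (hd : 2 * η ≤ d)
    (hd2 : 2 * d ≤ β - α) :
    ∫ s in Iio (α + d), |secDiff f η s| ≤ 20 * K * (η * √η) := by
  have := h.reflect.near_right hη hd (by linarith)
  simp only [secDiff_reflect] at this
  rw [integral_comp_neg_Ioi (-α - d) (fun s => |secDiff f η s|)] at this
  rw [show -(-α - d) = α + d by ring, integral_Iic_eq_integral_Iio] at this
  exact this

lemma integrable_mul_ee {g : ℝ → ℝ} (hg : Integrable g) (lam : ℝ) :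
    Integrable (fun s => (g s : ℂ) * ee (lam * s)) := by
  refine hg.ofReal.mul_bdd (c := 1) ?_ ?_
  · exact (continuous_ee.comp (by fun_prop)).aestronglyMeasurable
  · exact Filter.Eventually.of_forall fun s => (norm_ee _).le

/-- Second differences act on the Fourier transform as multiplication by `4 sin²(πλη)`. -/
lemma fourier_secDiff (h : SliceFn f α β K) (η lam : ℝ) :
    ∫ s, (secDiff f η s : ℂ) * ee (lam * s) =
      ((4 * Real.sin (Real.pi * (lam * η)) ^ 2 : ℝ) : ℂ) * ∫ s, (f s : ℂ) * ee (lam * s) := by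
  have hf := integrable_mul_ee h.integrable lam
  have i1 := hf.comp_sub_right η
  have i2 := hf.comp_add_right η
  have e : (fun s => (secDiff f η s : ℂ) * ee (lam * s)) = fun s =>
      2 * ((f s : ℂ) * ee (lam * s)) - ee (lam * η) * ((f (s - η) : ℂ) * ee (lam * (s - η)))
        - ee (-(lam * η)) * ((f (s + η) : ℂ) * ee (lam * (s + η))) := by
    funext s
    have a1 : ee (lam * s) = ee (lam * η) * ee (lam * (s - η)) := by
      rw [← ee_add]; congr 1; ring
    have a2 : ee (lam * s) = ee (-(lam * η)) * ee (lam * (s + η)) := by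
      rw [← ee_add]; congr 1; ring
    have : (secDiff f η s : ℂ) * ee (lam * s) = 2 * ((f s : ℂ) * ee (lam * s))
        - (f (s - η) : ℂ) * ee (lam * s) - (f (s + η) : ℂ) * ee (lam * s) := by
      unfold secDiff; push_cast; ring
    rw [this]
    conv_lhs => rw [show (f (s - η) : ℂ) * ee (lam * s) =
      (f (s - η) : ℂ) * (ee (lam * η) * ee (lam * (s - η))) by rw [← a1],
      show (f (s + η) : ℂ) * ee (lam * s) =
      (f (s + η) : ℂ) * (ee (-(lam * η)) * ee (lam * (s + η))) by rw [← a2]]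
    ring
  have i3 : Integrable (fun s => 2 * ((f s : ℂ) * ee (lam * s))
      - ee (lam * η) * ((f (s - η) : ℂ) * ee (lam * (s - η)))) :=
    (hf.const_mul 2).sub (i1.const_mul _)
  rw [e, integral_sub i3 (i2.const_mul _), integral_sub (hf.const_mul 2) (i1.const_mul _), integral_const_mul, integral_const_mul,
    integral_const_mul, integral_sub_right_eq_self (fun s => (f s : ℂ) * ee (lam * s)) η,
    integral_add_right_eq_self (fun s => (f s : ℂ) * ee (lam * s)) η, ← two_sub_ee]
  ring

end SliceFn

/-! ### Wave packets and almost orthogonality -/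

/-- `U` is a superposition `∫ q(s) e(tcs) ds` of total mass at most `M` of exponentials whose
frequencies `cs` lie within distance `w` of `τ`. -/
def Packet (U : ℝ → ℂ) (τ M w : ℝ) : Prop :=
  ∃ (q : ℝ → ℝ) (c : ℝ), Integrable q ∧ ∫ s, |q s| ≤ M ∧ (∀ s, q s ≠ 0 → |c * s - τ| ≤ w) ∧
    ∀ t, U t = ∫ s, (q s : ℂ) * ee (t * (c * s))

lemma conj_ee (x : ℝ) : (starRingEnd ℂ) (ee x) = ee (-x) := by
  unfold ee
  rw [← Complex.exp_conj, map_mul, Complex.conj_ofReal, Complex.conj_I]; congr 1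
  push_cast; ring

lemma integrable_mul_ee' {g : ℝ → ℝ} (hg : Integrable g) (t c : ℝ) :
    Integrable (fun s => (g s : ℂ) * ee (t * (c * s))) := by
  have := SliceFn.integrable_mul_ee hg (t * c)
  simpa only [mul_assoc] using this

lemma Packet.continuous {U : ℝ → ℂ} {τ M w : ℝ} (h : Packet U τ M w) : Continuous U := by
  obtain ⟨q, c, hq, -, -, hU⟩ := h
  rw [show U = fun t => ∫ s, (q s : ℂ) * ee (t * (c * s)) from funext hU]
  refine continuous_of_dominated (bound := fun s => |q s|) (fun t => ?_) (fun t => ?_) hq.abs ?_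
  · exact (integrable_mul_ee' hq t c).aestronglyMeasurable
  · exact Filter.Eventually.of_forall fun s => by simp [norm_ee]
  · exact Filter.Eventually.of_forall fun s =>
      continuous_const.mul (continuous_ee.comp (by fun_prop))

lemma Packet.norm_le {U : ℝ → ℂ} {τ M w : ℝ} (h : Packet U τ M w) (t : ℝ) : ‖U t‖ ≤ M := by
  obtain ⟨q, c, hq, hM, -, hU⟩ := h
  rw [hU]
  refine (norm_integral_le_integral_norm _).trans (le_trans (le_of_eq ?_) hM)
  simp [norm_ee]

/-- The Gaussian window centred at `a`. -/
def gw (a t : ℝ) : ℝ := Real.exp (-Real.pi * (t - a) ^ 2)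

lemma gw_integrable (a : ℝ) : Integrable (gw a) := by
  have := (integrable_exp_neg_mul_sq Real.pi_pos).comp_sub_right a
  exact this

lemma continuous_gw (a : ℝ) : Continuous (gw a) := by unfold gw; fun_prop

lemma norm_gauss (a σ : ℝ) : ‖∫ t, (gw a t : ℂ) * ee (t * σ)‖ = Real.exp (-Real.pi * σ ^ 2) := by
  have h0 : ∫ t, (gw a t : ℂ) * ee (t * σ) = ee (a * σ) * ∫ t, (gw 0 t : ℂ) * ee (t * σ) := by
    rw [← integral_const_mul, ← integral_sub_right_eq_self
      (fun t => ee (a * σ) * ((gw 0 t : ℂ) * ee (t * σ))) a]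
    congr 1; funext t
    have : ee (t * σ) = ee (a * σ) * ee ((t - a) * σ) := by rw [← ee_add]; congr 1; ring
    rw [this]; simp only [gw, sub_zero]; ring
  have h1 := fourierIntegral_gaussian (b := (Real.pi : ℂ)) (by simpa using Real.pi_pos)
    ((2 * Real.pi * σ : ℝ) : ℂ)
  have h2 : ∫ t, (gw 0 t : ℂ) * ee (t * σ) = ((Real.exp (-Real.pi * σ ^ 2) : ℝ) : ℂ) := by
    have hp : (Real.pi : ℂ) ≠ 0 := by exact_mod_cast Real.pi_ne_zero
    rw [div_self hp, Complex.one_cpow, one_mul] at h1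
    calc _ = ∫ x : ℝ, Complex.exp (Complex.I * ((2 * Real.pi * σ : ℝ) : ℂ) * x)
          * Complex.exp (-(Real.pi : ℂ) * x ^ 2) := by
          congr 1; funext t
          unfold gw ee
          rw [mul_comm]; push_cast; congr 2; ring
          rw [sub_zero]
      _ = _ := by
        rw [h1]; push_cast; congr 1; field_simp; ring
  rw [h0, h2, norm_mul, norm_ee, one_mul, Complex.norm_real, Real.norm_of_nonneg (Real.exp_pos _).le]

lemma gauss_le (y : ℝ) : Real.exp (-Real.pi * y ^ 2) ≤ 8 / (1 + |y|) ^ 4 := by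
  rw [le_div_iff₀ (by positivity), neg_mul, Real.exp_neg, inv_mul_le_iff₀ (Real.exp_pos _)]
  have h1 : 1 + Real.pi * y ^ 2 + (Real.pi * y ^ 2) ^ 2 / 2 ≤ Real.exp (Real.pi * y ^ 2) :=
    Real.quadratic_le_exp_of_nonneg (by positivity)
  have h2 : y ^ 4 ≤ (Real.pi * y ^ 2) ^ 2 / 2 := by
    have : (2:ℝ) ≤ Real.pi ^ 2 := by nlinarith [Real.pi_gt_three]
    nlinarith [sq_nonneg (y ^ 2)]
  have h3 : (1 + |y|) ^ 4 ≤ 8 * (1 + y ^ 4) := by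
    have : y ^ 4 = |y| ^ 4 := by rw [← abs_pow, abs_of_nonneg (by positivity)]
    rw [this]
    nlinarith [sq_nonneg (|y| - 1), sq_nonneg (|y| ^ 2 - 1), abs_nonneg y,
      sq_nonneg (|y| ^ 2 - |y|), sq_nonneg (|y| * (|y| - 1))]
  have h4 : 0 ≤ Real.pi * y ^ 2 := by positivity
  linarith

/-- Packets with well separated central frequencies are almost orthogonal. -/
lemma packet_inner {U V : ℝ → ℂ} {τ τ' M M' w : ℝ} (hw : 0 ≤ w) (hU : Packet U τ M w)
    (hV : Packet V τ' M' w) (a : ℝ) :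
    ‖∫ t, (gw a t : ℂ) * (U t * (starRingEnd ℂ) (V t))‖ ≤
      (8 * (1 + 2 * w) ^ 4) * (M * M' * ((1 + |τ - τ'|) ^ 4)⁻¹) := by
  obtain ⟨q, c, hq, hM, hs, hU⟩ := hU
  obtain ⟨q', c', hq', hM', hs', hV⟩ := hV
  set B : ℝ := 8 * (1 + 2 * w) ^ 4 * ((1 + |τ - τ'|) ^ 4)⁻¹ with hB
  have hB0 : 0 ≤ B := by positivity
  have e1 : ∀ t, U t * (starRingEnd ℂ) (V t) = ∫ z : ℝ × ℝ, ((q z.1 : ℂ) * (q' z.2 : ℂ)) *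
      ee (t * (c * z.1 - c' * z.2)) := by
    intro t
    have : (starRingEnd ℂ) (V t) = ∫ s, (q' s : ℂ) * ee (-(t * (c' * s))) := by
      rw [hV, ← integral_conj]
      congr 1; funext s
      rw [map_mul, conj_ee, Complex.conj_ofReal]
    rw [this, hU, ← integral_prod_mul (μ := (volume : Measure ℝ)) (ν := (volume : Measure ℝ))]
    congr 1; funext z
    rw [show t * (c * z.1 - c' * z.2) = t * (c * z.1) + -(t * (c' * z.2)) by ring, ee_add]
    ring
  have hqq : Integrable (fun z : ℝ × ℝ => (q z.1 : ℂ) * (q' z.2 : ℂ)) :=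
    Integrable.mul_prod (μ := (volume : Measure ℝ)) (ν := (volume : Measure ℝ)) hq.ofReal hq'.ofReal
  have hall : Integrable (fun p : ℝ × (ℝ × ℝ) => ((gw a p.1 : ℂ) *
      ((q p.2.1 : ℂ) * (q' p.2.2 : ℂ))) * ee (p.1 * (c * p.2.1 - c' * p.2.2)))
      ((volume : Measure ℝ).prod (volume : Measure (ℝ × ℝ))) := by
    refine (Integrable.mul_prod (gw_integrable a).ofReal hqq).mul_bdd (c := 1) ?_ ?_
    · exact (continuous_ee.comp (by fun_prop)).aestronglyMeasurable
    · exact Filter.Eventually.of_forall fun s => (norm_ee _).le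
  have e2 : ∫ t, (gw a t : ℂ) * (U t * (starRingEnd ℂ) (V t)) =
      ∫ z : ℝ × ℝ, ((q z.1 : ℂ) * (q' z.2 : ℂ)) *
        ∫ t, (gw a t : ℂ) * ee (t * (c * z.1 - c' * z.2)) := by
    calc _ = ∫ t, ∫ z : ℝ × ℝ, ((gw a t : ℂ) *
      ((q z.1 : ℂ) * (q' z.2 : ℂ))) * ee (t * (c * z.1 - c' * z.2)) := by
          congr 1; funext t
          rw [e1, ← integral_const_mul]
          congr 1; funext z; ring
      _ = ∫ z : ℝ × ℝ, ∫ t, ((gw a t : ℂ) *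
      ((q z.1 : ℂ) * (q' z.2 : ℂ))) * ee (t * (c * z.1 - c' * z.2)) := integral_integral_swap hall
      _ = _ := by
          congr 1; funext z
          rw [← integral_const_mul]
          congr 1; funext t; ring
  rw [e2]
  have key : ∀ z : ℝ × ℝ, ‖((q z.1 : ℂ) * (q' z.2 : ℂ)) *
        ∫ t, (gw a t : ℂ) * ee (t * (c * z.1 - c' * z.2))‖ ≤ B * (|q z.1| * |q' z.2|) := by
    intro z
    rw [norm_mul, norm_gauss, norm_mul, Complex.norm_real, Complex.norm_real, Real.norm_eq_abs,
      Real.norm_eq_abs, mul_comm]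
    by_cases h1 : q z.1 = 0
    · simp [h1]
    by_cases h2 : q' z.2 = 0
    · simp [h2]
    have b1 := hs _ h1
    have b2 := hs' _ h2
    gcongr
    refine (gauss_le _).trans ?_
    set y := c * z.1 - c' * z.2
    have : 1 + |τ - τ'| ≤ (1 + 2 * w) * (1 + |y|) := by
      have h3 : |τ - τ'| ≤ 2 * w + |y| := by
        have : τ - τ' = -(c * z.1 - τ) + (c' * z.2 - τ') + y := by simp only [y]; ring
        rw [this]
        refine (abs_add_three _ _ _).trans ?_
        rw [abs_neg]; linarith
      nlinarith [abs_nonneg y, mul_nonneg hw (abs_nonneg y)]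
    have h4 : (1 + |τ - τ'|) ^ 4 ≤ (1 + 2 * w) ^ 4 * (1 + |y|) ^ 4 := by
      rw [← mul_pow]; gcongr
    rw [hB, ← div_eq_mul_inv, div_le_div_iff₀ (by positivity) (by positivity)]
    nlinarith
  have hqq' : Integrable (fun z : ℝ × ℝ => B * (|q z.1| * |q' z.2|)) :=
    (Integrable.mul_prod (μ := (volume : Measure ℝ)) (ν := (volume : Measure ℝ))
      hq.abs hq'.abs).const_mul B
  refine (norm_integral_le_of_norm_le hqq' (Filter.Eventually.of_forall key)).trans ?_
  rw [integral_const_mul]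
  have e3 : ∫ z : ℝ × ℝ, |q z.1| * |q' z.2| = (∫ s, |q s|) * ∫ s, |q' s| :=
    integral_prod_mul (μ := (volume : Measure ℝ)) (ν := (volume : Measure ℝ))
      (fun s => |q s|) (fun s => |q' s|)
  rw [e3]
  have i1 : 0 ≤ ∫ s, |q s| := integral_nonneg fun _ => abs_nonneg _
  have i2 : 0 ≤ ∫ s, |q' s| := integral_nonneg fun _ => abs_nonneg _
  calc _ ≤ B * (M * M') := by gcongr; exact i1.trans hM
    _ = _ := by rw [hB]; ring

/-- Mean square estimate for a finite sum of packets, by almost orthogonality and Schur's test. -/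
lemma packet_sum {ι : Type*} (S : Finset ι) (U : ι → ℝ → ℂ) (τ M A : ι → ℝ) {w : ℝ} (hw : 0 ≤ w)
    (hU : ∀ k ∈ S, Packet (U k) (τ k) (M k) w)
    (hA : ∀ k ∈ S, ∑ l ∈ S, ((1 + |τ k - τ l|) ^ 4)⁻¹ ≤ A k) (a : ℝ) :
    ∫ t in a..(a + 1), ‖∑ k ∈ S, U k t‖ ^ 2 ≤
      Real.exp Real.pi * (8 * (1 + 2 * w) ^ 4) * ∑ k ∈ S, M k ^ 2 * A k := by
  have hcont : Continuous fun t => ∑ k ∈ S, U k t :=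
    continuous_finsetSum _ fun k hk => (hU k hk).continuous
  have hterm : ∀ k ∈ S, ∀ l ∈ S, Integrable
      (fun t => (gw a t : ℂ) * (U k t * (starRingEnd ℂ) (U l t))) := by
    intro k hk l hl
    refine (gw_integrable a).ofReal.mul_bdd (c := M k * M l) ?_ ?_
    · exact ((hU k hk).continuous.mul
        (Complex.continuous_conj.comp (hU l hl).continuous)).aestronglyMeasurable
    · refine Filter.Eventually.of_forall fun t => ?_
      rw [norm_mul, RCLike.norm_conj]
      exact mul_le_mul ((hU k hk).norm_le t) ((hU l hl).norm_le t) (norm_nonneg _)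
        ((norm_nonneg _).trans ((hU k hk).norm_le t))
  have hexp : ∀ t, ((gw a t * ‖∑ k ∈ S, U k t‖ ^ 2 : ℝ) : ℂ) =
      ∑ k ∈ S, ∑ l ∈ S, (gw a t : ℂ) * (U k t * (starRingEnd ℂ) (U l t)) := by
    intro t
    push_cast
    rw [← Complex.mul_conj', map_sum, Finset.sum_mul_sum, Finset.mul_sum]
    simp only [Finset.mul_sum]
  have hintC : Integrable (fun t => ((gw a t * ‖∑ k ∈ S, U k t‖ ^ 2 : ℝ) : ℂ)) := by
    simp only [hexp]
    exact integrable_finsetSum _ fun k hk => integrable_finsetSum _ fun l hl => hterm k hk l hl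
  have hintR : Integrable (fun t => gw a t * ‖∑ k ∈ S, U k t‖ ^ 2) := hintC.re
  have step1 : ∫ t in a..(a + 1), ‖∑ k ∈ S, U k t‖ ^ 2 ≤
      Real.exp Real.pi * ∫ t, gw a t * ‖∑ k ∈ S, U k t‖ ^ 2 := by
    rw [← integral_const_mul]
    calc ∫ t in a..(a + 1), ‖∑ k ∈ S, U k t‖ ^ 2
        ≤ ∫ t in a..(a + 1), Real.exp Real.pi * (gw a t * ‖∑ k ∈ S, U k t‖ ^ 2) := by
          refine intervalIntegral.integral_mono_on (by linarith)
            ((hcont.norm.pow 2).intervalIntegrable _ _)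
            (hintR.const_mul _).intervalIntegrable ?_
          intro t ht
          rw [← mul_assoc]
          refine le_mul_of_one_le_left (by positivity) ?_
          unfold gw
          rw [← Real.exp_add]
          apply Real.one_le_exp
          have h1 : (t - a) ^ 2 ≤ 1 := by
            have := ht.1; have := ht.2; nlinarith
          nlinarith [Real.pi_pos]
      _ ≤ ∫ t, Real.exp Real.pi * (gw a t * ‖∑ k ∈ S, U k t‖ ^ 2) := by
          rw [intervalIntegral.integral_of_le (by linarith)]
          refine setIntegral_le_integral (hintR.const_mul _) (Filter.Eventually.of_forall fun t => ?_)
          have : 0 ≤ gw a t := (Real.exp_pos _).le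
          simp only [Pi.zero_apply]; positivity
  have step2 : ∫ t, gw a t * ‖∑ k ∈ S, U k t‖ ^ 2 ≤
      ∑ k ∈ S, ∑ l ∈ S, (8 * (1 + 2 * w) ^ 4) * (M k * M l * ((1 + |τ k - τ l|) ^ 4)⁻¹) := by
    calc ∫ t, gw a t * ‖∑ k ∈ S, U k t‖ ^ 2
        ≤ ‖((∫ t, gw a t * ‖∑ k ∈ S, U k t‖ ^ 2 : ℝ) : ℂ)‖ := by
          rw [Complex.norm_real]; exact le_abs_self _
      _ = ‖∑ k ∈ S, ∑ l ∈ S, ∫ t, (gw a t : ℂ) * (U k t * (starRingEnd ℂ) (U l t))‖ := by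
          rw [← integral_complex_ofReal]
          simp only [hexp]
          rw [integral_finsetSum _ fun k hk => integrable_finsetSum _ fun l hl => hterm k hk l hl]
          congr 1
          exact Finset.sum_congr rfl fun k hk => integral_finsetSum _ fun l hl => hterm k hk l hl
      _ ≤ _ := by
          refine (norm_sum_le _ _).trans (Finset.sum_le_sum fun k hk => ?_)
          refine (norm_sum_le _ _).trans (Finset.sum_le_sum fun l hl => ?_)
          exact packet_inner hw (hU k hk) (hU l hl) a
  have step3 : ∑ k ∈ S, ∑ l ∈ S, M k * M l * ((1 + |τ k - τ l|) ^ 4)⁻¹ ≤ ∑ k ∈ S, M k ^ 2 * A k := by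
    have h1 : ∀ k ∈ S, ∑ l ∈ S, M k ^ 2 * ((1 + |τ k - τ l|) ^ 4)⁻¹ ≤ M k ^ 2 * A k := by
      intro k hk
      rw [← Finset.mul_sum]
      exact mul_le_mul_of_nonneg_left (hA k hk) (sq_nonneg _)
    have h2 := Finset.sum_le_sum h1
    have h3 : ∑ k ∈ S, ∑ l ∈ S, M l ^ 2 * ((1 + |τ k - τ l|) ^ 4)⁻¹ =
        ∑ k ∈ S, ∑ l ∈ S, M k ^ 2 * ((1 + |τ k - τ l|) ^ 4)⁻¹ := by
      rw [Finset.sum_comm]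
      refine Finset.sum_congr rfl fun k _ => Finset.sum_congr rfl fun l _ => ?_
      rw [abs_sub_comm]
    have h4 : 2 * ∑ k ∈ S, ∑ l ∈ S, M k * M l * ((1 + |τ k - τ l|) ^ 4)⁻¹ ≤
        ∑ k ∈ S, ∑ l ∈ S, M k ^ 2 * ((1 + |τ k - τ l|) ^ 4)⁻¹ +
        ∑ k ∈ S, ∑ l ∈ S, M l ^ 2 * ((1 + |τ k - τ l|) ^ 4)⁻¹ := by
      rw [Finset.mul_sum, ← Finset.sum_add_distrib]
      refine Finset.sum_le_sum fun k _ => ?_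
      rw [Finset.mul_sum, ← Finset.sum_add_distrib]
      refine Finset.sum_le_sum fun l _ => ?_
      rw [← add_mul, ← mul_assoc]
      gcongr
      nlinarith [sq_nonneg (M k - M l)]
    linarith
  simp only [← Finset.mul_sum] at step2
  calc _ ≤ _ := step1
    _ ≤ Real.exp Real.pi * ((8 * (1 + 2 * w) ^ 4) * ∑ k ∈ S, M k ^ 2 * A k) := by
        gcongr
        refine step2.trans ?_
        gcongr
    _ = _ := by ring

/-! ### Lattice sums -/

/-- Inclusion of the integer lattice in the plane. -/
def toP (k : ℤ × ℤ) : ℝ × ℝ := ((k.1 : ℝ), (k.2 : ℝ))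

/-- The half-open unit square with lower left corner `k`. -/
def unitSq (k : ℤ × ℤ) : Set (ℝ × ℝ) := Ico (k.1 : ℝ) (k.1 + 1) ×ˢ Ico (k.2 : ℝ) (k.2 + 1)

lemma measurableSet_unitSq (k : ℤ × ℤ) : MeasurableSet (unitSq k) :=
  measurableSet_Ico.prod measurableSet_Ico

lemma volume_unitSq (k : ℤ × ℤ) : volume.real (unitSq k) = 1 := by
  unfold unitSq
  rw [Measure.real, Measure.volume_eq_prod, Measure.prod_prod]
  simp

lemma volume_unitSq_ne_top (k : ℤ × ℤ) : volume (unitSq k) ≠ ⊤ := by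
  unfold unitSq
  rw [Measure.volume_eq_prod, Measure.prod_prod]
  simp

lemma unitSq_disjoint {k l : ℤ × ℤ} (h : k ≠ l) : Disjoint (unitSq k) (unitSq l) := by
  rw [Set.disjoint_left]
  rintro ⟨x, y⟩ ⟨hx, hy⟩ ⟨hx', hy'⟩
  simp only [mem_Ico] at hx hy hx' hy'
  apply h
  ext
  · rw [← Int.floor_eq_iff.2 hx, ← Int.floor_eq_iff.2 hx']
  · rw [← Int.floor_eq_iff.2 hy, ← Int.floor_eq_iff.2 hy']

lemma unitSq_norm {k : ℤ × ℤ} {y : ℝ × ℝ} (h : y ∈ unitSq k) : ‖y - toP k‖ ≤ 1 := by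
  obtain ⟨h1, h2⟩ := h
  simp only [mem_Ico] at h1 h2
  rw [Prod.norm_def]
  refine max_le ?_ ?_
  · rw [Real.norm_eq_abs, abs_le]; simp only [toP, Prod.fst_sub]; constructor <;> linarith [h1.1, h1.2]
  · rw [Real.norm_eq_abs, abs_le]; simp only [toP, Prod.snd_sub]; constructor <;> linarith [h2.1, h2.2]

/-- Positively homogeneous Lipschitz functions bounded below by a multiple of the norm; the support
functions of `Ω` and `-Ω` are of this kind. -/
structure NormLike (ρ : ℝ × ℝ → ℝ) (r B : ℝ) : Prop where
  r_pos : 0 < r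
  B_nonneg : 0 ≤ B
  hom : ∀ (c : ℝ), 0 < c → ∀ x, ρ (c • x) = c * ρ x
  lip : ∀ x y, |ρ x - ρ y| ≤ B * ‖x - y‖
  lower : ∀ x, r * ‖x‖ ≤ ρ x

namespace NormLike
variable {ρ : ℝ × ℝ → ℝ} {r B : ℝ}

lemma continuous (h : NormLike ρ r B) : Continuous ρ := by
  refine (LipschitzWith.of_dist_le_mul (K := ⟨B, h.B_nonneg⟩) fun x y => ?_).continuous
  rw [Real.dist_eq, dist_eq_norm]; exact h.lip x y

lemma finite_sublevel (h : NormLike ρ r B) (b : ℝ) : volume {y | ρ y < b} ≠ ⊤ := by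
  have : {y | ρ y < b} ⊆ Metric.closedBall 0 (b / r) := by
    intro y hy
    rw [mem_closedBall_zero_iff, le_div_iff₀ h.r_pos]
    have := h.lower y
    have h2 : ρ y < b := hy
    linarith
  exact ((measure_mono this).trans_lt measure_closedBall_lt_top).ne

lemma volume_sublevel (h : NormLike ρ r B) {b : ℝ} (hb : 0 < b) :
    volume.real {y | ρ y < b} = b ^ 2 * volume.real {y | ρ y < 1} := by
  have : {y | ρ y < b} = b • {y | ρ y < 1} := by
    ext y
    rw [mem_smul_set_iff_inv_smul_mem₀ hb.ne']
    simp only [mem_ofPred_eq]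
    rw [h.hom _ (inv_pos.2 hb), inv_mul_lt_iff₀ hb, mul_one]
  rw [this, Measure.real, Measure.addHaar_smul, ENNReal.toReal_mul,
    ENNReal.toReal_ofReal (abs_nonneg _), Module.finrank_prod, Module.finrank_self,
    abs_of_pos (by positivity)]
  rfl

/-- Lattice points near a level curve of `ρ` are bounded in number by the area of an annulus. -/
lemma count (h : NormLike ρ r B) : ∃ C : ℝ, 0 ≤ C ∧ ∀ (S : Finset (ℤ × ℤ)) (x J : ℝ), 0 ≤ x →
    1 ≤ J → (∀ l ∈ S, |x - ρ (toP l)| < J) → (S.card : ℝ) ≤ C * ((x + J) * J) := by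
  set V := volume.real {y | ρ y < 1} with hV
  have hV0 : 0 ≤ V := measureReal_nonneg
  have hB := h.B_nonneg
  refine ⟨4 * V * (1 + B) ^ 2, by positivity, fun S x J hx hJ hS => ?_⟩
  set L := J + B with hL
  have hL0 : 0 < L := by linarith
  set T : Set (ℝ × ℝ) := ⋃ l ∈ S, unitSq l with hT
  have hTm : MeasurableSet T := S.measurableSet_biUnion fun l _ => measurableSet_unitSq l
  have hTv : volume.real T = S.card := by
    rw [hT, measureReal_biUnion_finset (fun k _ l _ hkl => unitSq_disjoint hkl)
      (fun l _ => measurableSet_unitSq l) (fun l _ => volume_unitSq_ne_top l)]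
    simp [volume_unitSq]
  have hTs : ∀ y ∈ T, |x - ρ y| < L := by
    intro y hy
    rw [hT, mem_iUnion₂] at hy
    obtain ⟨l, hl, hy⟩ := hy
    have h1 := hS l hl
    have h2 := h.lip y (toP l)
    have h3 : B * ‖y - toP l‖ ≤ B * 1 := by gcongr; exact unitSq_norm hy
    calc |x - ρ y| = |(x - ρ (toP l)) + -(ρ y - ρ (toP l))| := by ring_nf
      _ ≤ |x - ρ (toP l)| + |ρ y - ρ (toP l)| := by
          rw [← abs_neg (ρ y - ρ (toP l))]; exact abs_add_le _ _
      _ < L := by rw [hL]; linarith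
  have hsub : T ⊆ {y | ρ y < x + L} := fun y hy => by
    have := (abs_lt.1 (hTs y hy)).1
    simp only [mem_ofPred_eq]; linarith
  have main : (S.card : ℝ) ≤ 4 * V * ((x + L) * L) := by
    rw [← hTv]
    rcases le_or_gt x L with hxL | hxL
    · have := measureReal_mono hsub (h.finite_sublevel _)
      rw [h.volume_sublevel (b := x + L) (by linarith)] at this
      have h3 : (x + L) ^ 2 ≤ 4 * ((x + L) * L) := by nlinarith
      nlinarith
    · have hd : Disjoint T {y | ρ y < x - L} := by
        rw [Set.disjoint_left]
        intro y hy hy'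
        have := (abs_lt.1 (hTs y hy)).2
        simp only [mem_ofPred_eq] at hy'; linarith
      have hsub2 : T ∪ {y | ρ y < x - L} ⊆ {y | ρ y < x + L} :=
        union_subset hsub fun y hy => by simp only [mem_ofPred_eq] at hy ⊢; linarith
      have := measureReal_mono hsub2 (h.finite_sublevel _)
      rw [measureReal_union hd (measurableSet_lt h.continuous.measurable measurable_const)
        ((measure_mono hsub).trans_lt (h.finite_sublevel _).lt_top).ne (h.finite_sublevel _),
        h.volume_sublevel (b := x - L) (by linarith),
        h.volume_sublevel (b := x + L) (by linarith)] at this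
      have h3 : (x + L) ^ 2 - (x - L) ^ 2 ≤ 4 * ((x + L) * L) := by nlinarith
      nlinarith
  refine main.trans ?_
  have h1 : x + L ≤ (1 + B) * (x + J) := by rw [hL]; nlinarith [mul_nonneg hB hx]
  have h2 : L ≤ (1 + B) * J := by rw [hL]; nlinarith
  calc 4 * V * ((x + L) * L) ≤ 4 * V * (((1 + B) * (x + J)) * ((1 + B) * J)) := by gcongr
    _ = _ := by ring

/-- The row sums needed for Schur's test. -/
lemma row_sum (h : NormLike ρ r B) : ∃ C : ℝ, 0 ≤ C ∧ ∀ (S : Finset (ℤ × ℤ)) (x : ℝ), 0 ≤ x →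
    ∑ l ∈ S, ((1 + |x - ρ (toP l)|) ^ 4)⁻¹ ≤ C * (x + 1) := by
  obtain ⟨C, hC, hcount⟩ := h.count
  have hsum : Summable fun j : ℕ => 1 / ((j : ℝ) + 1) ^ 2 := by
    have := (summable_nat_add_iff 1).2 (Real.summable_one_div_nat_pow.2 (le_refl 2))
    simpa using this
  refine ⟨C * ∑' j : ℕ, 1 / ((j : ℝ) + 1) ^ 2,
    mul_nonneg hC (tsum_nonneg fun j => by positivity), fun S x hx => ?_⟩
  set φ : ℤ × ℤ → ℕ := fun l => ⌊|x - ρ (toP l)|⌋₊ with hφ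
  rw [← Finset.sum_fiberwise_of_maps_to (g := φ) (t := S.image φ)
    (fun l hl => Finset.mem_image_of_mem φ hl)]
  calc _ ≤ ∑ j ∈ S.image φ, C * (x + 1) * (1 / ((j : ℝ) + 1) ^ 2) := by
        refine Finset.sum_le_sum fun j _ => ?_
        have hc := hcount (S.filter fun l => φ l = j) x (j + 1) hx
          (by linarith [(Nat.cast_nonneg j : (0:ℝ) ≤ j)]) (fun l hl => by
            rw [← (Finset.mem_filter.1 hl).2]; exact Nat.lt_floor_add_one _)
        have hb : ∀ l ∈ S.filter (fun l => φ l = j),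
            ((1 + |x - ρ (toP l)|) ^ 4)⁻¹ ≤ (((j : ℝ) + 1) ^ 4)⁻¹ := by
          intro l hl
          have : (j : ℝ) ≤ |x - ρ (toP l)| := by
            rw [← (Finset.mem_filter.1 hl).2]; exact Nat.floor_le (abs_nonneg _)
          exact inv_anti₀ (by positivity) (pow_le_pow_left₀ (by positivity) (by linarith) 4)
        refine (Finset.sum_le_card_nsmul _ _ _ hb).trans ?_
        rw [nsmul_eq_mul]
        have hj : (0:ℝ) ≤ j := Nat.cast_nonneg j
        calc _ ≤ (C * ((x + (j + 1)) * (j + 1))) * (((j : ℝ) + 1) ^ 4)⁻¹ := by gcongr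
          _ ≤ (C * (((x + 1) * (j + 1)) * (j + 1))) * (((j : ℝ) + 1) ^ 4)⁻¹ := by
              gcongr; nlinarith
          _ = _ := by field_simp
    _ = C * (x + 1) * ∑ j ∈ S.image φ, (1 / ((j : ℝ) + 1) ^ 2) := by rw [Finset.mul_sum]
    _ ≤ C * (x + 1) * ∑' j : ℕ, 1 / ((j : ℝ) + 1) ^ 2 := by
        gcongr
        exact hsum.sum_le_tsum _ fun j _ => by positivity
    _ = _ := by ring

end NormLike

/-- Sup norm of an integer vector. -/
def nn (k : ℤ × ℤ) : ℕ := max k.1.natAbs k.2.natAbs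

lemma nn_pos {k : ℤ × ℤ} (hk : k ≠ 0) : 1 ≤ nn k := by
  unfold nn
  by_contra hc
  apply hk
  have h1 : k.1 = 0 := by omega
  have h2 : k.2 = 0 := by omega
  exact Prod.ext h1 h2

lemma sum_shell (S : Finset (ℤ × ℤ)) (hS : ∀ k ∈ S, k ≠ 0) (g : ℕ → ℝ) (hg : ∀ n, 0 ≤ g n) :
    ∃ X : ℕ, ∑ k ∈ S, g (nn k) ≤ ∑ N ∈ Finset.Icc 1 X, 8 * (N * g N) := by
  refine ⟨S.sup nn, ?_⟩
  rw [← Finset.sum_fiberwise_of_maps_to (g := nn) (t := Finset.Icc 1 (S.sup nn))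
    (fun l hl => Finset.mem_Icc.2 ⟨nn_pos (hS l hl), Finset.le_sup hl⟩)]
  refine Finset.sum_le_sum fun N hN => ?_
  have hN1 : N ≠ 0 := by have := (Finset.mem_Icc.1 hN).1; omega
  have hcard : (S.filter fun l => nn l = N).card ≤ 8 * N := by
    rw [← Int.card_box hN1]
    refine Finset.card_le_card fun l hl => ?_
    rw [Int.mem_box]; exact (Finset.mem_filter.1 hl).2
  have hb : ∀ l ∈ S.filter (fun l => nn l = N), g (nn l) ≤ g N := by
    intro l hl
    rw [(Finset.mem_filter.1 hl).2]
  refine (Finset.sum_le_card_nsmul _ _ _ hb).trans ?_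
  rw [nsmul_eq_mul, ← mul_assoc]
  refine mul_le_mul_of_nonneg_right ?_ (hg N)
  exact_mod_cast hcard

/-- A sum over the integers `1 ≤ N ≤ X`, split at `M`; beyond `M` it is dominated by `Σ M/N²`. -/
lemma sum_split (g a : ℕ → ℝ) {M c : ℝ} (hM : 1 ≤ M) (hc : 0 ≤ c)
    (ha : ∀ N, 0 ≤ a N)
    (h1 : ∀ N : ℕ, 1 ≤ N → (N : ℝ) ≤ M → g N ≤ a N)
    (h2 : ∀ N : ℕ, M < N → g N ≤ c * M * ((N : ℝ) ^ 2)⁻¹) (X : ℕ) :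
    ∑ N ∈ Finset.Icc 1 X, g N ≤ ∑ N ∈ Finset.Icc 1 ⌊M⌋₊, a N + 2 * c := by
  have hM0 : 0 ≤ M := by linarith
  rw [← Finset.sum_filter_add_sum_filter_not (Finset.Icc 1 X) (fun N : ℕ => (N : ℝ) ≤ M)]
  refine add_le_add ?_ ?_
  · refine (Finset.sum_le_sum (g := a) fun N hN => ?_).trans
      (Finset.sum_le_sum_of_subset_of_nonneg ?_ fun N _ _ => ha N)
    · rw [Finset.mem_filter, Finset.mem_Icc] at hN
      exact h1 N hN.1.1 hN.2
    · intro N hN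
      rw [Finset.mem_filter, Finset.mem_Icc] at hN
      exact Finset.mem_Icc.2 ⟨hN.1.1, Nat.le_floor hN.2⟩
  · calc _ ≤ ∑ N ∈ (Finset.Icc 1 X).filter (fun N : ℕ => ¬ (N : ℝ) ≤ M),
          c * M * ((N : ℝ) ^ 2)⁻¹ := by
          refine Finset.sum_le_sum fun N hN => h2 N ?_
          exact not_le.1 (Finset.mem_filter.1 hN).2
      _ ≤ ∑ N ∈ Finset.Ioo ⌊M⌋₊ (X + 1), c * M * ((N : ℝ) ^ 2)⁻¹ := by
          refine Finset.sum_le_sum_of_subset_of_nonneg ?_ fun N _ _ => by positivity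
          intro N hN
          rw [Finset.mem_filter, Finset.mem_Icc, not_le] at hN
          exact Finset.mem_Ioo.2 ⟨(Nat.floor_lt hM0).2 hN.2, by omega⟩
      _ = c * M * ∑ N ∈ Finset.Ioo ⌊M⌋₊ (X + 1), ((N : ℝ) ^ 2)⁻¹ := by rw [Finset.mul_sum]
      _ ≤ c * M * (2 / (⌊M⌋₊ + 1)) := by gcongr; exact sum_Ioo_inv_sq_le _ _
      _ ≤ c * M * (2 / M) := by gcongr; exact (Nat.lt_floor_add_one M).le
      _ = 2 * c := by field_simp

/-- Bound for the coefficients, at frequencies of size `N`, of a smoothing at scale `1/M`. -/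
def cut (M : ℝ) (N : ℕ) : ℝ := min 1 ((M / N) ^ 2)

lemma cut_nonneg (M : ℝ) (N : ℕ) : 0 ≤ cut M N := le_min zero_le_one (sq_nonneg _)

lemma sum_inv_sqrt (m : ℕ) : ∑ N ∈ Finset.Icc 1 m, (√(N : ℝ))⁻¹ ≤ 2 * √(m : ℝ) := by
  induction m with
  | zero => simp
  | succ n ih =>
    rw [Finset.sum_Icc_succ_top (by omega)]
    have h1 : 0 < √((n + 1 : ℕ) : ℝ) := Real.sqrt_pos.2 (by positivity)
    have h2 : √((n + 1 : ℕ) : ℝ) ^ 2 = n + 1 := by rw [Real.sq_sqrt (by positivity)]; push_cast; ring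
    have h3 : √(n : ℝ) ^ 2 = n := Real.sq_sqrt (by positivity)
    have h4 : (√((n + 1 : ℕ) : ℝ))⁻¹ ≤ 2 * √((n + 1 : ℕ) : ℝ) - 2 * √(n : ℝ) := by
      rw [inv_le_iff_one_le_mul₀ h1]
      nlinarith [sq_nonneg (√((n + 1 : ℕ) : ℝ) - √(n : ℝ))]
    linarith

lemma sum_near {M : ℝ} (hM : 1 ≤ M) (S : Finset (ℤ × ℤ)) (hS : ∀ k ∈ S, k ≠ 0) :
    ∑ k ∈ S, ((nn k : ℝ) ^ 2)⁻¹ * cut M (nn k) ≤ 8 * (3 + Real.log M) := by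
  obtain ⟨X, hX⟩ := sum_shell S hS (fun N => ((N : ℝ) ^ 2)⁻¹ * cut M N)
    (fun N => mul_nonneg (by positivity) (cut_nonneg _ _))
  refine hX.trans ?_
  rw [← Finset.mul_sum]
  have := sum_split (fun N : ℕ => (N : ℝ) * (((N : ℝ) ^ 2)⁻¹ * cut M N)) (fun N => (N : ℝ)⁻¹) hM
    zero_le_one (fun N => by positivity) (fun N hN _ => ?_) (fun N hN => ?_) X
  · have h2 := harmonic_floor_le_one_add_log M hM
    rw [harmonic_eq_sum_Icc] at h2
    push_cast at h2
    linarith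
  · have : (0:ℝ) < N := by exact_mod_cast hN
    calc (N : ℝ) * (((N : ℝ) ^ 2)⁻¹ * cut M N) ≤ (N : ℝ) * (((N : ℝ) ^ 2)⁻¹ * 1) := by
          gcongr; exact min_le_left _ _
      _ = _ := by field_simp
  · have h0 : (0:ℝ) < N := by linarith
    calc (N : ℝ) * (((N : ℝ) ^ 2)⁻¹ * cut M N) ≤ (N : ℝ) * (((N : ℝ) ^ 2)⁻¹ * (M / N) ^ 2) := by
          gcongr; exact min_le_right _ _
      _ = (M / N) * M * ((N : ℝ) ^ 2)⁻¹ := by field_simp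
      _ ≤ 1 * M * ((N : ℝ) ^ 2)⁻¹ := by gcongr; rw [div_le_one h0]; exact hN.le

lemma sum_far {M : ℝ} (hM : 1 ≤ M) (S : Finset (ℤ × ℤ)) (hS : ∀ k ∈ S, k ≠ 0) :
    ∑ k ∈ S, ((nn k : ℝ) * √(nn k : ℝ))⁻¹ * cut M (nn k) ≤ 32 * √M := by
  obtain ⟨X, hX⟩ := sum_shell S hS (fun N => ((N : ℝ) * √(N : ℝ))⁻¹ * cut M N)
    (fun N => mul_nonneg (by positivity) (cut_nonneg _ _))
  refine hX.trans ?_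
  rw [← Finset.mul_sum]
  have := sum_split (fun N : ℕ => (N : ℝ) * (((N : ℝ) * √(N : ℝ))⁻¹ * cut M N))
    (fun N => (√(N : ℝ))⁻¹) (c := √M) hM
    (Real.sqrt_nonneg _) (fun N => by positivity) (fun N hN _ => ?_) (fun N hN => ?_) X
  · have h2 := sum_inv_sqrt ⌊M⌋₊
    have h3 : √(⌊M⌋₊ : ℝ) ≤ √M := Real.sqrt_le_sqrt (Nat.floor_le (by linarith))
    linarith
  · have : (0:ℝ) < N := by exact_mod_cast hN
    calc (N : ℝ) * (((N : ℝ) * √(N : ℝ))⁻¹ * cut M N) ≤ (N : ℝ) * (((N : ℝ) * √(N : ℝ))⁻¹ * 1) := by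
          gcongr; exact min_le_left _ _
      _ = _ := by field_simp
  · have h0 : (0:ℝ) < N := by linarith
    have h1 : 0 < √M := Real.sqrt_pos.2 (by linarith)
    have h2 : √M ≤ √(N : ℝ) := Real.sqrt_le_sqrt hN.le
    have h3 : √M ^ 2 = M := Real.sq_sqrt (by linarith)
    have h4 : 0 < √(N : ℝ) := Real.sqrt_pos.2 h0
    calc (N : ℝ) * (((N : ℝ) * √(N : ℝ))⁻¹ * cut M N)
        ≤ (N : ℝ) * (((N : ℝ) * √(N : ℝ))⁻¹ * (M / N) ^ 2) := by
          gcongr; exact min_le_right _ _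
      _ = (√(N : ℝ))⁻¹ * M * M * ((N : ℝ) ^ 2)⁻¹ := by field_simp
      _ ≤ (√M)⁻¹ * M * M * ((N : ℝ) ^ 2)⁻¹ := by gcongr
      _ = √M * M * ((N : ℝ) ^ 2)⁻¹ := by
          congr 2
          rw [inv_mul_eq_iff_eq_mul₀ h1.ne', ← sq, h3]

/-! ### The smoothing kernel and its Fourier series -/

lemma hasSum_inv_sq_ee_aux {x : ℝ} (hx : x ∈ Icc (0:ℝ) 1) :
    HasSum (fun n : ℤ => 1 / (n : ℂ) ^ 2 * ee (n * x))
      ((2 * Real.pi ^ 2 * (x ^ 2 - x + 1 / 6) : ℝ) : ℂ) := by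
  have h := hasSum_one_div_pow_mul_fourier_mul_bernoulliFun (le_refl 2) hx
  have hb : bernoulliFun 2 x = x ^ 2 - x + 1 / 6 := by
    unfold bernoulliFun
    have : Polynomial.bernoulli 2 = Polynomial.X ^ 2 - Polynomial.X + Polynomial.C (1 / 6) := by
      have h2 : (Polynomial.C (-1 / 2) : Polynomial ℚ) * 2 = -1 := by
        rw [← Polynomial.C_ofNat, ← Polynomial.C_mul, ← Polynomial.C_1, ← Polynomial.C_neg]
        norm_num
      simp [Polynomial.bernoulli, Finset.sum_range_succ, ← Polynomial.C_mul_X_pow_eq_monomial]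
      linear_combination Polynomial.X * h2
    rw [this]
    simp
  rw [hb] at h
  convert h using 1
  · funext n
    rw [fourier_coe_apply]
    unfold ee
    congr 2
    push_cast; simp; ring
  · push_cast
    rw [mul_pow, Complex.I_sq, Nat.factorial_two]
    push_cast; ring

lemma hasSum_inv_sq_ee {x : ℝ} (hx : |x| ≤ 1) :
    HasSum (fun n : ℤ => 1 / (n : ℂ) ^ 2 * ee (n * x))
      ((2 * Real.pi ^ 2 * (x ^ 2 - |x| + 1 / 6) : ℝ) : ℂ) := by
  rcases le_total 0 x with h | h
  · rw [abs_of_nonneg h] at hx ⊢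
    exact hasSum_inv_sq_ee_aux ⟨h, hx⟩
  · rw [abs_of_nonpos h] at hx ⊢
    have := hasSum_inv_sq_ee_aux (x := -x) ⟨by linarith, hx⟩
    rw [neg_sq] at this
    rw [← (Equiv.neg ℤ).hasSum_iff]
    convert this using 1
    funext n
    simp

/-- The 1-periodic triangle of height `1/ε` and base `2ε` centred at the integers. -/
def tri (ε x : ℝ) : ℝ := max 0 (ε - |x - round x|) / ε ^ 2

/-- The Fourier coefficients of `tri ε`. -/
def pc (ε : ℝ) (n : ℤ) : ℝ := Real.sinc (Real.pi * (n * ε)) ^ 2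

lemma pc_nonneg (ε : ℝ) (n : ℤ) : 0 ≤ pc ε n := sq_nonneg _

lemma pc_le_one (ε : ℝ) (n : ℤ) : pc ε n ≤ 1 := by
  unfold pc
  rw [sq_le_one_iff_abs_le_one]; exact Real.abs_sinc_le_one _

lemma pc_zero (ε : ℝ) : pc ε 0 = 1 := by simp [pc]

lemma pc_eq {ε : ℝ} (hε : 0 < ε) {n : ℤ} (hn : n ≠ 0) :
    pc ε n = 4 * Real.sin (Real.pi * (n * ε)) ^ 2 * (1 / (4 * Real.pi ^ 2 * ε ^ 2))
      * (1 / (n : ℝ) ^ 2) := by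
  have hn' : (n : ℝ) ≠ 0 := by exact_mod_cast hn
  have hp := Real.pi_pos
  unfold pc
  rw [Real.sinc_of_ne_zero (by positivity)]
  field_simp

lemma pc_le {ε : ℝ} (hε : 0 < ε) {n : ℤ} (hn : n ≠ 0) : pc ε n ≤ (1 / ε / n) ^ 2 := by
  have hn' : (n : ℝ) ≠ 0 := by exact_mod_cast hn
  have hp := Real.pi_gt_three
  unfold pc
  rw [Real.sinc_of_ne_zero (by positivity), div_pow]
  have h1 : Real.sin (Real.pi * (n * ε)) ^ 2 ≤ 1 := Real.sin_sq_le_one _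
  calc _ ≤ 1 / (Real.pi * (n * ε)) ^ 2 := by gcongr
    _ ≤ 1 / (1 * (n * ε)) ^ 2 := by
        rw [mul_pow, mul_pow 1]
        have : 0 < ((n : ℝ) * ε) ^ 2 := by positivity
        gcongr
        linarith
    _ = _ := by field_simp

lemma summable_pc {ε : ℝ} (hε : 0 < ε) : Summable (pc ε) := by
  have h1 : Summable fun n : ℤ => (1 / ε ^ 2) * (1 / (n : ℝ) ^ 2) + (if n = 0 then (1:ℝ) else 0) :=
    ((Real.summable_one_div_int_pow.2 one_lt_two).mul_left _).add
      (summable_of_hasFiniteSupport ((Set.finite_singleton (0:ℤ)).subset fun n hn => by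
        by_contra h; simp_all))
  refine Summable.of_nonneg_of_le (pc_nonneg ε) (fun n => ?_) h1
  by_cases hn : n = 0
  · subst hn; simp [pc_zero]
  · refine (pc_le hε hn).trans (le_of_eq ?_)
    simp [hn]; field_simp

lemma ee_int (n : ℤ) : ee n = 1 := by
  unfold ee
  rw [Complex.exp_eq_one_iff]
  exact ⟨n, by push_cast; ring⟩

lemma hasSum_tri {ε : ℝ} (hε : 0 < ε) (hε2 : ε ≤ 1 / 2) (x : ℝ) :
    HasSum (fun n : ℤ => (pc ε n : ℂ) * ee (n * x)) ((tri ε x : ℝ) : ℂ) := by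
  set y := x - round x with hy
  have hy1 : |y| ≤ 1 / 2 := abs_sub_round x
  have hper : ∀ n : ℤ, ee (n * x) = ee (n * y) := by
    intro n
    rw [show (n : ℝ) * x = n * y + ((n * round x : ℤ) : ℝ) by rw [hy]; push_cast; ring, ee_add,
      ee_int, mul_one]
  have hy2 := abs_le.1 hy1
  have a0 := hasSum_inv_sq_ee (x := y) (by linarith)
  have a1 := hasSum_inv_sq_ee (x := y + ε) (abs_le.2 ⟨by linarith, by linarith⟩)
  have a2 := hasSum_inv_sq_ee (x := y - ε) (abs_le.2 ⟨by linarith, by linarith⟩)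
  have a3 := (((a0.mul_left 2).sub a1).sub a2).mul_left ((1 / (4 * Real.pi ^ 2 * ε ^ 2) : ℝ) : ℂ)
  have a4 := a3.add (hasSum_ite_eq (0:ℤ) (1:ℂ))
  have hv : ((tri ε x : ℝ) : ℂ) = ((1 / (4 * Real.pi ^ 2 * ε ^ 2) : ℝ) : ℂ) *
      (2 * ((2 * Real.pi ^ 2 * (y ^ 2 - |y| + 1 / 6) : ℝ) : ℂ)
        - ((2 * Real.pi ^ 2 * ((y + ε) ^ 2 - |y + ε| + 1 / 6) : ℝ) : ℂ)
        - ((2 * Real.pi ^ 2 * ((y - ε) ^ 2 - |y - ε| + 1 / 6) : ℝ) : ℂ)) + 1 := by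
    rw [← Complex.ofReal_one, ← Complex.ofReal_ofNat, ← Complex.ofReal_mul, ← Complex.ofReal_sub,
      ← Complex.ofReal_sub, ← Complex.ofReal_mul, ← Complex.ofReal_add]
    congr 1
    unfold tri
    rw [← hy]
    have hp := Real.pi_pos
    have key : 2 * max 0 (ε - |y|) = |y + ε| + |y - ε| - 2 * |y| := by
      rcases le_total 0 y with h | h
      · rw [abs_of_nonneg h, abs_of_nonneg (by linarith : 0 ≤ y + ε)]
        rcases le_total ε y with h' | h'
        · rw [abs_of_nonneg (by linarith), max_eq_left (by linarith)]; ring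
        · rw [abs_of_nonpos (by linarith), max_eq_right (by linarith)]; ring
      · rw [abs_of_nonpos h, abs_of_nonpos (by linarith : y - ε ≤ 0)]
        rcases le_total ε (-y) with h' | h'
        · rw [abs_of_nonpos (by linarith), max_eq_left (by linarith)]; ring
        · rw [abs_of_nonneg (by linarith), max_eq_right (by linarith)]; ring
    have key' : max 0 (ε - |y|) = (|y + ε| + |y - ε| - 2 * |y|) / 2 := by linarith
    rw [key']
    field_simp
    ring
  rw [hv]
  refine cast (congrArg (fun f => HasSum f _) (funext fun n => Eq.symm ?_)) a4
  rw [hper]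
  by_cases hn : n = 0
  · subst hn; simp [pc_zero, ee_zero]
  · rw [pc_eq hε hn, if_neg hn, add_zero,
        show (n : ℝ) * (y + ε) = n * y + n * ε by ring,
        show (n : ℝ) * (y - ε) = n * y + -(n * ε) by ring, ee_add,
      ee_add, Complex.ofReal_mul, Complex.ofReal_mul, ← two_sub_ee]
    push_cast; ring

lemma tri_nonneg {ε : ℝ} (x : ℝ) : 0 ≤ tri ε x := by unfold tri; positivity

lemma measurable_tri (ε : ℝ) : Measurable (tri ε) := by
  have : Measurable fun x : ℝ => ((round x : ℤ) : ℝ) := by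
    simp_rw [round_eq]
    exact (measurable_from_top (f := fun n : ℤ => (n : ℝ))).comp
      (Int.measurable_floor.comp (measurable_id.add_const _))
  unfold tri
  fun_prop

lemma tri_le {ε : ℝ} (hε : 0 < ε) (x : ℝ) : tri ε x ≤ 1 / ε := by
  unfold tri
  rw [div_le_iff₀ (by positivity)]
  have : 1 / ε * ε ^ 2 = ε := by field_simp
  rw [this]
  exact max_le hε.le (by linarith [abs_nonneg (x - round x)])

lemma integral_tri {ε : ℝ} (hε : 0 < ε) (hε2 : ε ≤ 1 / 2) (n : ℤ) :
    ∫ x in Metric.ball (n : ℝ) ε, tri ε x = 1 := by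
  rw [Real.ball_eq_Ioo, ← integral_Ioc_eq_integral_Ioo, ← intervalIntegral.integral_of_le (by linarith)]
  have h1 : ∫ x in (n : ℝ) - ε..n + ε, tri ε x = ∫ x in (n : ℝ) - ε..n + ε, (ε - |x - n|) / ε ^ 2 := by
    rw [intervalIntegral.integral_of_le (by linarith), intervalIntegral.integral_of_le (by linarith),
      integral_Ioc_eq_integral_Ioo, integral_Ioc_eq_integral_Ioo]
    refine setIntegral_congr_fun measurableSet_Ioo fun x hx => ?_
    have hr : round x = n := by
      rw [round_eq, Int.floor_eq_iff]; constructor <;> linarith [hx.1, hx.2]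
    have : |x - n| ≤ ε := abs_le.2 ⟨by linarith [hx.1], by linarith [hx.2]⟩
    simp only [tri]
    rw [hr, max_eq_right (by linarith)]
  rw [h1, intervalIntegral.integral_comp_sub_right (fun x => (ε - |x|) / ε ^ 2)]
  rw [intervalIntegral.integral_div]
  have e1 : (n : ℝ) - ε - n = -ε := by ring
  have e2 : (n : ℝ) + ε - n = ε := by ring
  rw [e1, e2, ← intervalIntegral.integral_add_adjacent_intervals (b := 0)
    (Continuous.intervalIntegrable (by fun_prop) _ _) (Continuous.intervalIntegrable (by fun_prop) _ _)]
  have h2 : ∫ x in (-ε)..0, (ε - |x|) = ∫ x in (-ε)..0, (ε + x) := by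
    refine intervalIntegral.integral_congr fun x hx => ?_
    rw [uIcc_of_le (by linarith)] at hx
    rw [abs_of_nonpos hx.2]; ring
  have h3 : ∫ x in (0:ℝ)..ε, (ε - |x|) = ∫ x in (0:ℝ)..ε, (ε - x) := by
    refine intervalIntegral.integral_congr fun x hx => ?_
    rw [uIcc_of_le (by linarith)] at hx
    rw [abs_of_nonneg hx.1]
  rw [h2, h3, intervalIntegral.integral_add (by simp) (by simp),
    intervalIntegral.integral_sub (by simp) (by simp)]
  simp
  field_simp
  ring

/-- The periodic smoothing kernel in the plane. -/
def ker (ε : ℝ) (x : ℝ × ℝ) : ℝ := tri ε x.1 * tri ε x.2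

/-- The Fourier coefficients of `ker ε`. -/
def pk (ε : ℝ) (k : ℤ × ℤ) : ℝ := pc ε k.1 * pc ε k.2

lemma pk_nonneg (ε : ℝ) (k : ℤ × ℤ) : 0 ≤ pk ε k := mul_nonneg (pc_nonneg _ _) (pc_nonneg _ _)

lemma pk_zero (ε : ℝ) : pk ε 0 = 1 := by simp [pk, pc_zero]

lemma summable_pk {ε : ℝ} (hε : 0 < ε) : Summable (pk ε) :=
  (summable_pc hε).mul_of_nonneg (summable_pc hε) (pc_nonneg ε) (pc_nonneg ε)

lemma pc_le_cut {ε : ℝ} (hε : 0 < ε) {n : ℤ} (hn : n ≠ 0) : pc ε n ≤ cut (1 / ε) n.natAbs := by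
  refine le_min (pc_le_one _ _) ((pc_le hε hn).trans (le_of_eq ?_))
  rw [div_pow (1 / ε), div_pow (1 / ε)]
  congr 1
  rw [Nat.cast_natAbs, Int.cast_abs, sq_abs]

lemma pk_le_cut {ε : ℝ} (hε : 0 < ε) {k : ℤ × ℤ} (hk : k ≠ 0) : pk ε k ≤ cut (1 / ε) (nn k) := by
  have hpos := nn_pos hk
  rcases le_total k.1.natAbs k.2.natAbs with h | h
  · have e : nn k = k.2.natAbs := max_eq_right h
    rw [e] at hpos ⊢
    refine le_trans ?_ (pc_le_cut hε (by intro h0; rw [h0] at hpos; simp at hpos))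
    exact mul_le_of_le_one_left (pc_nonneg _ _) (pc_le_one _ _)
  · have e : nn k = k.1.natAbs := max_eq_left h
    rw [e] at hpos ⊢
    refine le_trans ?_ (pc_le_cut hε (by intro h0; rw [h0] at hpos; simp at hpos))
    exact mul_le_of_le_one_right (pc_nonneg _ _) (pc_le_one _ _)

/-- The standard pairing of an integer vector with a point of the plane. -/
def pair (k : ℤ × ℤ) (x : ℝ × ℝ) : ℝ := k.1 * x.1 + k.2 * x.2

lemma hasSum_ker {ε : ℝ} (hε : 0 < ε) (hε2 : ε ≤ 1 / 2) (x : ℝ × ℝ) :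
    HasSum (fun k : ℤ × ℤ => (pk ε k : ℂ) * ee (pair k x)) ((ker ε x : ℝ) : ℂ) := by
  have hs : ∀ x : ℝ, Summable fun n : ℤ => ‖(pc ε n : ℂ) * ee (n * x)‖ := by
    intro x
    simpa [norm_ee, abs_of_nonneg (pc_nonneg ε _)] using summable_pc hε
  have hm : Summable fun k : ℤ × ℤ => ((pc ε k.1 : ℂ) * ee (k.1 * x.1)) * ((pc ε k.2 : ℂ) * ee (k.2 * x.2)) :=
    summable_mul_of_summable_norm (f := fun n : ℤ => (pc ε n : ℂ) * ee (n * x.1))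
      (g := fun n : ℤ => (pc ε n : ℂ) * ee (n * x.2)) (hs x.1) (hs x.2)
  have key := HasSum.mul (hasSum_tri hε hε2 x.1) (hasSum_tri hε hε2 x.2) hm
  have hv : ((ker ε x : ℝ) : ℂ) = ((tri ε x.1 : ℝ) : ℂ) * ((tri ε x.2 : ℝ) : ℂ) := by
    unfold ker; rw [Complex.ofReal_mul]
  rw [hv]
  refine cast (congrArg (fun f => HasSum f _) (funext fun k => Eq.symm ?_)) key
  unfold pk pair
  rw [ee_add, Complex.ofReal_mul]
  ring

lemma ker_nonneg (ε : ℝ) (x : ℝ × ℝ) : 0 ≤ ker ε x := mul_nonneg (tri_nonneg _) (tri_nonneg _)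

lemma measurable_ker (ε : ℝ) : Measurable (ker ε) :=
  ((measurable_tri ε).comp measurable_fst).mul ((measurable_tri ε).comp measurable_snd)

lemma ker_le {ε : ℝ} (hε : 0 < ε) (x : ℝ × ℝ) : ker ε x ≤ 1 / ε * (1 / ε) :=
  mul_le_mul (tri_le hε _) (tri_le hε _) (tri_nonneg _) (by positivity)

lemma integrableOn_ker {ε : ℝ} (hε : 0 < ε) {T : Set (ℝ × ℝ)} (hT : volume T ≠ ⊤) :
    IntegrableOn (ker ε) T :=
  Measure.integrableOn_of_bounded (M := 1 / ε * (1 / ε)) hT (measurable_ker ε).aestronglyMeasurable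
    (Filter.Eventually.of_forall fun x => by
      rw [Real.norm_of_nonneg (ker_nonneg _ _)]; exact ker_le hε x)

lemma integral_ker_ball {ε : ℝ} (hε : 0 < ε) (hε2 : ε ≤ 1 / 2) (n : ℤ × ℤ) :
    ∫ x in Metric.ball (toP n) ε, ker ε x = 1 := by
  unfold toP ker
  rw [← ball_prod_same, Measure.volume_eq_prod, setIntegral_prod_mul, integral_tri hε hε2,
    integral_tri hε hε2, one_mul]

lemma ball_disjoint {ε : ℝ} (hε2 : ε ≤ 1 / 2) {k l : ℤ × ℤ} (h : k ≠ l) :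
    Disjoint (Metric.ball (toP k) ε) (Metric.ball (toP l) ε) := by
  apply Metric.ball_disjoint_ball
  have : (1:ℝ) ≤ dist (toP k) (toP l) := by
    by_contra hc
    rw [not_le, Prod.dist_eq, max_lt_iff] at hc
    apply h
    simp only [toP, Real.dist_eq] at hc
    have h1 : |k.1 - l.1| < 1 := by exact_mod_cast hc.1
    have h2 : |k.2 - l.2| < 1 := by exact_mod_cast hc.2
    rw [Int.abs_lt_one_iff] at h1 h2
    exact Prod.ext (by omega) (by omega)
  linarith

lemma integral_ker_balls {ε : ℝ} (hε : 0 < ε) (hε2 : ε ≤ 1 / 2) (F : Finset (ℤ × ℤ)) :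
    ∫ x in ⋃ n ∈ F, Metric.ball (toP n) ε, ker ε x = F.card := by
  rw [integral_biUnion_finset F (fun _ _ => Metric.isOpen_ball.measurableSet)
    (fun k _ l _ h => ball_disjoint hε2 h)
    (fun n _ => integrableOn_ker hε measure_ball_lt_top.ne)]
  simp [integral_ker_ball hε hε2]

lemma card_le_integral_ker {ε : ℝ} (hε : 0 < ε) (hε2 : ε ≤ 1 / 2) {T : Set (ℝ × ℝ)}
    (hT : volume T ≠ ⊤) {F : Finset (ℤ × ℤ)}
    (h : ∀ n ∈ F, Metric.ball (toP n) ε ⊆ T) : (F.card : ℝ) ≤ ∫ x in T, ker ε x := by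
  rw [← integral_ker_balls hε hε2 F]
  exact setIntegral_mono_set (integrableOn_ker hε hT)
    (Filter.Eventually.of_forall fun x => ker_nonneg _ _)
    (LE.le.eventuallyLE (iUnion₂_subset h))

lemma integral_ker_le_card {ε : ℝ} (hε : 0 < ε) (hε2 : ε ≤ 1 / 2) {T : Set (ℝ × ℝ)}
    (hTm : MeasurableSet T) {F : Finset (ℤ × ℤ)}
    (h : ∀ n, (Metric.ball (toP n) ε ∩ T).Nonempty → n ∈ F) :
    ∫ x in T, ker ε x ≤ (F.card : ℝ) := by
  rw [← integral_ker_balls hε hε2 F]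
  have hU : MeasurableSet (⋃ n ∈ F, Metric.ball (toP n) ε) :=
    F.measurableSet_biUnion fun n _ => Metric.isOpen_ball.measurableSet
  have hUt : volume (⋃ n ∈ F, Metric.ball (toP n) ε) ≠ ⊤ :=
    (measure_biUnion_lt_top F.finite_toSet fun n _ => measure_ball_lt_top).ne
  rw [setIntegral_eq_of_subset_of_forall_sdiff_eq_zero (s := T ∩ ⋃ n ∈ F, Metric.ball (toP n) ε)
    hTm inter_subset_left]
  · exact setIntegral_mono_set (integrableOn_ker hε hUt)
      (Filter.Eventually.of_forall fun x => ker_nonneg _ _)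
      (LE.le.eventuallyLE inter_subset_right)
  · rintro x ⟨hx, hx'⟩
    by_contra hne
    have hne' : tri ε x.1 ≠ 0 ∧ tri ε x.2 ≠ 0 := mul_ne_zero_iff.1 hne
    have aux : ∀ y : ℝ, tri ε y ≠ 0 → |y - round y| < ε := by
      intro y hy
      by_contra hc
      apply hy
      unfold tri
      rw [max_eq_left (by linarith), zero_div]
    have hb : x ∈ Metric.ball (toP (round x.1, round x.2)) ε := by
      rw [Metric.mem_ball, Prod.dist_eq, max_lt_iff]
      exact ⟨aux _ hne'.1, aux _ hne'.2⟩
    exact hx' ⟨hx, mem_iUnion₂.2 ⟨_, h _ ⟨x, hb, hx⟩, hb⟩⟩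

/-! ### Smoothing the lattice point count -/

/-- A bounded open convex planar set containing the open square of half-side `r`. -/
structure Body (D : Set (ℝ × ℝ)) (r : ℝ) : Prop where
  conv : Convex ℝ D
  opn : IsOpen D
  bdd : Bornology.IsBounded D
  r_pos : 0 < r
  ball : Metric.ball 0 r ⊆ D

/-- Number of lattice points in `t • D`. -/
def cnt (D : Set (ℝ × ℝ)) (t : ℝ) : ℕ := Nat.card {n : ℤ × ℤ | toP n ∈ t • D}

/-- The Fourier transform of the indicator function of `D` at `-t k`. -/
def FI (D : Set (ℝ × ℝ)) (k : ℤ × ℤ) (t : ℝ) : ℂ := ∫ x in D, ee (t * pair k x)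

lemma continuous_pair (k : ℤ × ℤ) : Continuous (pair k) := by unfold pair; fun_prop

lemma norm_toP (n : ℤ × ℤ) : ‖toP n‖ = nn n := by
  unfold toP nn
  rw [Prod.norm_def]
  simp only [Real.norm_eq_abs]
  push_cast
  simp [Nat.cast_natAbs]

namespace Body
variable {D : Set (ℝ × ℝ)} {r : ℝ}

lemma finite_points (h : Body D r) (t : ℝ) : {n : ℤ × ℤ | toP n ∈ t • D}.Finite := by
  obtain ⟨B, hB⟩ := (h.bdd.smul₀ t).subset_closedBall 0
  refine (((finite_Icc (-⌈B⌉) ⌈B⌉).prod (finite_Icc (-⌈B⌉) ⌈B⌉))).subset fun n hn => ?_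
  have h1 := hB hn
  rw [mem_closedBall_zero_iff, Prod.norm_def, max_le_iff] at h1
  simp only [toP, Real.norm_eq_abs] at h1
  have aux : ∀ m : ℤ, |(m : ℝ)| ≤ B → m ∈ Icc (-⌈B⌉) ⌈B⌉ := by
    intro m hm
    have h2 : |(m : ℝ)| ≤ (⌈B⌉ : ℤ) := hm.trans (Int.le_ceil B)
    exact abs_le.1 (by exact_mod_cast h2)
  exact ⟨aux _ h1.1, aux _ h1.2⟩

lemma cnt_eq (h : Body D r) (t : ℝ) : cnt D t = (h.finite_points t).toFinset.card := by
  unfold cnt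
  rw [Nat.card_coe_set_eq, ncard_eq_toFinset_card _ (h.finite_points t)]

lemma volume_ne_top (h : Body D r) : volume D ≠ ⊤ := h.bdd.measure_lt_top.ne

lemma volume_smul_ne_top (h : Body D r) (t : ℝ) : volume (t • D) ≠ ⊤ :=
  (h.bdd.smul₀ t).measure_lt_top.ne

lemma measurableSet_smul (h : Body D r) {t : ℝ} (ht : 0 < t) : MeasurableSet (t • D) :=
  (h.opn.smul₀ ht.ne').measurableSet

/-- Thickening `t • D` by `ε` stays inside `(t + ε/r) • D`. -/
lemma thicken (h : Body D r) {t ε : ℝ} (ht : 0 ≤ t) (hε : 0 < ε) {x y : ℝ × ℝ}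
    (hx : x ∈ t • D) (hy : dist y x < ε) : y ∈ (t + ε / r) • D := by
  have hr := h.r_pos
  rw [h.conv.add_smul ht (by positivity)]
  refine ⟨x, hx, y - x, ?_, by simp⟩
  rw [mem_smul_set_iff_inv_smul_mem₀ (by positivity)]
  apply h.ball
  rw [mem_ball_zero_iff, norm_smul, Real.norm_of_nonneg (by positivity), inv_div,
    ← dist_eq_norm]
  calc r / ε * dist y x < r / ε * ε := by gcongr
    _ = r := by field_simp

lemma cnt_le (h : Body D r) {t ε : ℝ} (ht : 0 ≤ t) (hε : 0 < ε) (hε2 : ε ≤ 1 / 2) :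
    (cnt D t : ℝ) ≤ ∫ x in (t + ε / r) • D, ker ε x := by
  rw [h.cnt_eq]
  refine card_le_integral_ker hε hε2 (h.volume_smul_ne_top _) fun n hn y hy => ?_
  exact h.thicken ht hε ((h.finite_points t).mem_toFinset.1 hn) hy

lemma le_cnt (h : Body D r) {t ε : ℝ} (hε : 0 < ε) (hε2 : ε ≤ 1 / 2) (ht : ε / r < t) :
    ∫ x in (t - ε / r) • D, ker ε x ≤ (cnt D t : ℝ) := by
  rw [h.cnt_eq]
  refine integral_ker_le_card hε hε2 (h.measurableSet_smul (by linarith)) fun n ⟨y, hy, hyD⟩ => ?_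
  rw [(h.finite_points t).mem_toFinset]
  have := h.thicken (by linarith) hε hyD (y := toP n) (by rw [dist_comm]; exact hy)
  rwa [sub_add_cancel] at this

lemma norm_FI_le (h : Body D r) (k : ℤ × ℤ) (t : ℝ) : ‖FI D k t‖ ≤ volume.real D := by
  have := norm_setIntegral_le_of_norm_le_const (μ := volume) (s := D) (C := 1)
    (f := fun x => ee (t * pair k x)) h.volume_ne_top.lt_top (fun x _ => (norm_ee _).le)
  simpa [FI] using this

lemma FI_zero (t : ℝ) : FI D 0 t = (volume.real D : ℂ) := by
  simp [FI, pair, ee_zero]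

lemma integral_smul_ee (k : ℤ × ℤ) {t : ℝ} (ht : 0 < t) :
    ∫ x in t • D, ee (pair k x) = ((t ^ 2 : ℝ) : ℂ) * FI D k t := by
  have := Measure.setIntegral_comp_smul_of_pos (volume : Measure (ℝ × ℝ))
    (fun x => ee (pair k x)) D ht
  have h2 : FI D k t = ∫ x in D, ee (pair k (t • x)) := by
    unfold FI pair
    congr 1; funext x
    congr 1
    simp only [Prod.smul_fst, Prod.smul_snd, smul_eq_mul]; ring
  rw [h2, this, Module.finrank_prod, Module.finrank_self, Complex.real_smul, ← mul_assoc,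
    ← Complex.ofReal_mul, mul_inv_cancel₀ (by positivity), Complex.ofReal_one, one_mul]

lemma hasSum_integral_ker (h : Body D r) {t ε : ℝ} (ht : 0 < t) (hε : 0 < ε) (hε2 : ε ≤ 1 / 2) :
    HasSum (fun k : ℤ × ℤ => (pk ε k : ℂ) * (((t ^ 2 : ℝ) : ℂ) * FI D k t))
      ((∫ x in t • D, ker ε x : ℝ) : ℂ) := by
  have hfin : IsFiniteMeasure (volume.restrict (t • D)) :=
    ⟨by rw [Measure.restrict_apply_univ]; exact (h.volume_smul_ne_top t).lt_top⟩
  have hInt : ∀ k : ℤ × ℤ, Integrable (fun x => (pk ε k : ℂ) * ee (pair k x))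
      (volume.restrict (t • D)) := fun k =>
    Integrable.of_bound
      ((continuous_const.mul (continuous_ee.comp (continuous_pair k))).aestronglyMeasurable)
      (pk ε k) (Filter.Eventually.of_forall fun x => by
        simp [norm_ee, abs_of_nonneg (pk_nonneg ε k)])
  have key := hasSum_integral_of_summable_integral_norm hInt (by
    have : ∀ k : ℤ × ℤ, ∫ x in t • D, ‖(pk ε k : ℂ) * ee (pair k x)‖
        = pk ε k * volume.real (t • D) := by
      intro k
      simp only [norm_mul, norm_ee, Complex.norm_real, Real.norm_eq_abs,
        abs_of_nonneg (pk_nonneg ε k)]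
      simp [mul_comm]
    simp_rw [this]
    exact (summable_pk hε).mul_right _)
  have e1 : ∀ k : ℤ × ℤ, ∫ x in t • D, (pk ε k : ℂ) * ee (pair k x)
      = (pk ε k : ℂ) * (((t ^ 2 : ℝ) : ℂ) * FI D k t) := by
    intro k
    rw [integral_const_mul, integral_smul_ee k ht]
  have e2 : ∫ x in t • D, ∑' k : ℤ × ℤ, (pk ε k : ℂ) * ee (pair k x)
      = ((∫ x in t • D, ker ε x : ℝ) : ℂ) := by
    rw [← integral_complex_ofReal]
    congr 1; funext x
    exact (hasSum_ker hε hε2 x).tsum_eq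
  rw [e2] at key
  simp_rw [e1] at key
  exact key

/-- The truncated Fourier series of the smoothed lattice rest. -/
def trunc (D : Set (ℝ × ℝ)) (ε : ℝ) (S : Finset (ℤ × ℤ)) (t : ℝ) : ℂ :=
  ∑ k ∈ S, (pk ε k : ℂ) * (((t ^ 2 : ℝ) : ℂ) * FI D k t)

lemma exists_trunc (h : Body D r) {ε : ℝ} (hε : 0 < ε) (hε2 : ε ≤ 1 / 2) (T : ℝ) :
    ∃ S : Finset (ℤ × ℤ), (∀ k ∈ S, k ≠ 0) ∧ ∀ t, 0 < t → t ≤ T →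
      ‖((∫ x in t • D, ker ε x : ℝ) : ℂ) - ((t ^ 2 * volume.real D : ℝ) : ℂ) - trunc D ε S t‖
        ≤ 1 := by
  have hV : 0 ≤ volume.real D := measureReal_nonneg
  have hsum := (summable_pk hε).hasSum
  set Y := ∑' k, pk ε k with hY
  have hδ : 0 < 1 / (T ^ 2 * volume.real D + 1) := by positivity
  have hev : ∀ᶠ s : Finset (ℤ × ℤ) in Filter.atTop,
      Y - 1 / (T ^ 2 * volume.real D + 1) < ∑ k ∈ s, pk ε k :=
    hsum.eventually (lt_mem_nhds (by linarith))
  obtain ⟨s, hs0, hs⟩ := ((Filter.eventually_ge_atTop {0}).and hev).exists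
  have h0 : (0 : ℤ × ℤ) ∈ s := hs0 (Finset.mem_singleton_self _)
  refine ⟨s.erase 0, fun k hk => Finset.ne_of_mem_erase hk, fun t ht htT => ?_⟩
  have hX := h.hasSum_integral_ker ht hε hε2
  set f : ℤ × ℤ → ℂ := fun k => (pk ε k : ℂ) * (((t ^ 2 : ℝ) : ℂ) * FI D k t) with hf
  set g : ℤ × ℤ → ℝ := fun k => pk ε k * (t ^ 2 * volume.real D) with hg
  have hfg : ∀ k, ‖f k‖ ≤ g k := by
    intro k
    simp only [hf, hg, norm_mul, Complex.norm_real, Real.norm_eq_abs]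
    rw [abs_of_nonneg (pk_nonneg ε k), abs_of_nonneg (sq_nonneg t)]
    have := pk_nonneg ε k
    gcongr
    exact h.norm_FI_le k t
  have hgs : HasSum g (Y * (t ^ 2 * volume.real D)) := hsum.mul_right _
  have c1 := (s.hasSum_compl_iff (f := f) (a := ((∫ x in t • D, ker ε x : ℝ) : ℂ) - ∑ k ∈ s, f k)).2
    (by rw [sub_add_cancel]; exact hX)
  have c2 := (s.hasSum_compl_iff (f := g) (a := Y * (t ^ 2 * volume.real D) - ∑ k ∈ s, g k)).2
    (by rw [sub_add_cancel]; exact hgs)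
  have c3 := c1.norm_le_of_bounded c2 (fun k => hfg k)
  have e1 : ∑ k ∈ s, f k = ((t ^ 2 * volume.real D : ℝ) : ℂ) + trunc D ε (s.erase 0) t := by
    rw [← Finset.add_sum_erase s f h0]
    unfold trunc
    congr 1
    simp only [hf]
    rw [pk_zero, FI_zero]; push_cast; ring
  rw [e1, ← sub_sub] at c3
  refine c3.trans ?_
  simp only [hg]
  rw [← Finset.sum_mul, ← sub_mul]
  have ht2 : t ^ 2 ≤ T ^ 2 := by gcongr
  calc _ ≤ 1 / (T ^ 2 * volume.real D + 1) * (T ^ 2 * volume.real D + 1) := by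
        gcongr
        · linarith
        · nlinarith
    _ = 1 := by field_simp

/-- Comparison of the lattice rest with its smoothed and truncated Fourier series. -/
lemma rest_le (h : Body D r) {ε T : ℝ} (hε : 0 < ε) (hε2 : ε ≤ 1 / 2) {S : Finset (ℤ × ℤ)}
    (hS : ∀ t, 0 < t → t ≤ T →
      ‖((∫ x in t • D, ker ε x : ℝ) : ℂ) - ((t ^ 2 * volume.real D : ℝ) : ℂ) - trunc D ε S t‖ ≤ 1)
    {t : ℝ} (ht : ε / r < t) (htT : t + ε / r ≤ T) :
    |(cnt D t : ℝ) - t ^ 2 * volume.real D| ≤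
      ‖trunc D ε S (t + ε / r)‖ + ‖trunc D ε S (t - ε / r)‖ +
        (1 + ε / r * (2 * t + ε / r) * volume.real D) := by
  have hr := h.r_pos
  set c := ε / r with hc
  have hc0 : 0 < c := by positivity
  have hV : 0 ≤ volume.real D := measureReal_nonneg
  have aux : ∀ t, 0 < t → t ≤ T →
      |(∫ x in t • D, ker ε x) - t ^ 2 * volume.real D| ≤ 1 + ‖trunc D ε S t‖ := by
    intro t h1 h2
    have h3 := hS t h1 h2
    rw [← Complex.ofReal_sub] at h3
    have h4 := norm_le_norm_add_norm_sub'
      (((∫ x in t • D, ker ε x) - t ^ 2 * volume.real D : ℝ) : ℂ) (trunc D ε S t)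
    rw [Complex.norm_real, Real.norm_eq_abs] at h4
    linarith
  have u1 := (abs_le.1 (aux (t + c) (by linarith) htT)).2
  have u2 := (abs_le.1 (aux (t - c) (by linarith) (by linarith))).1
  have u3 := h.cnt_le (t := t) (by linarith) hε hε2
  have u4 := h.le_cnt (t := t) hε hε2 ht
  have n1 := norm_nonneg (trunc D ε S (t + c))
  have n2 := norm_nonneg (trunc D ε S (t - c))
  have v1 : ((t + c) ^ 2 - t ^ 2) * volume.real D = c * (2 * t + c) * volume.real D := by ring
  have v2 : (t ^ 2 - (t - c) ^ 2) * volume.real D ≤ c * (2 * t + c) * volume.real D := by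
    gcongr; nlinarith
  rw [← hc] at u3 u4
  rw [abs_le]
  constructor <;> nlinarith

end Body

/-! ### Chords of a planar convex domain -/

/-- The coordinates, along the direction `v`, of the points of `Ω` on the line through `s • u`
parallel to `v`. -/
def chord (Ω : Set E2) (u v : E2) (s : ℝ) : Set ℝ := {y | s • u + y • v ∈ Ω}

/-- `u, v` is an orthonormal basis of the plane. -/
structure Frame (u v : E2) : Prop where
  nu : ‖u‖ = 1
  nv : ‖v‖ = 1
  orth : ⟪v, u⟫ = 0
  expand : ∀ x : E2, x = ⟪x, u⟫ • u + ⟪x, v⟫ • v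

lemma Frame.neg {u v : E2} (h : Frame u v) : Frame (-u) v where
  nu := by rw [norm_neg, h.nu]
  nv := h.nv
  orth := by rw [inner_neg_right, h.orth, neg_zero]
  expand x := by
    rw [inner_neg_right, neg_smul_neg]; exact h.expand x

lemma Frame.inner_pt {u v : E2} (h : Frame u v) (s y : ℝ) : ⟪s • u + y • v, u⟫ = s := by
  rw [inner_add_left, inner_smul_left, inner_smul_left, h.orth, real_inner_self_eq_norm_sq, h.nu]
  simp

lemma chord_neg (Ω : Set E2) (u v : E2) (s : ℝ) : chord Ω (-u) v (-s) = chord Ω u v s := by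
  unfold chord; simp

/-- A bounded open convex planar set containing the origin. -/
structure Dom (Ω : Set E2) : Prop where
  conv : Convex ℝ Ω
  opn : IsOpen Ω
  bdd : Bornology.IsBounded Ω
  zero : (0 : E2) ∈ Ω

namespace Dom
variable {Ω : Set E2} {u v : E2}

lemma bddAbove_inner (hD : Dom Ω) (ξ : E2) : BddAbove ((fun x => ⟪x, ξ⟫) '' Ω) := by
  obtain ⟨B, hB⟩ := hD.bdd.subset_closedBall 0
  refine ⟨B * ‖ξ‖, ?_⟩
  rintro _ ⟨x, hx, rfl⟩
  have := hB hx
  rw [mem_closedBall_zero_iff] at this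
  exact (real_inner_le_norm x ξ).trans (by gcongr)

lemma inner_le_suppFn (hD : Dom Ω) (ξ : E2) {x : E2} (hx : x ∈ Ω) : ⟪x, ξ⟫ ≤ suppFn Ω ξ :=
  le_csSup (hD.bddAbove_inner ξ) ⟨x, hx, rfl⟩

lemma bounded_chord (hD : Dom Ω) (hf : Frame u v) (s : ℝ) : ∃ B, chord Ω u v s ⊆ Icc (-B) B := by
  obtain ⟨B, hB⟩ := hD.bdd.subset_closedBall 0
  refine ⟨B + |s|, fun y hy => abs_le.1 ?_⟩
  have h1 := hB (show s • u + y • v ∈ Ω from hy)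
  rw [mem_closedBall_zero_iff] at h1
  have h2 : ‖y • v‖ ≤ ‖s • u + y • v‖ + ‖s • u‖ := by
    calc ‖y • v‖ = ‖(s • u + y • v) - s • u‖ := by congr 1; abel
      _ ≤ _ := norm_sub_le _ _
  rw [norm_smul, norm_smul s, hf.nu, hf.nv, mul_one, mul_one, Real.norm_eq_abs,
    Real.norm_eq_abs] at h2
  linarith

lemma chord_eq_empty (hD : Dom Ω) (hf : Frame u v) {s : ℝ} (hs : suppFn Ω u ≤ s) : chord Ω u v s = ∅ := by
  rw [eq_empty_iff_forall_notMem]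
  intro y hy
  have hy' : s • u + y • v ∈ Ω := hy
  -- openness allows a small step in the direction `u` beyond the supporting line
  have hc : Continuous fun c : ℝ => (s + c) • u + y • v := by fun_prop
  have h1 : (fun c : ℝ => (s + c) • u + y • v) ⁻¹' Ω ∈ nhds (0:ℝ) :=
    hc.continuousAt.preimage_mem_nhds (hD.opn.mem_nhds (by simpa using hy'))
  obtain ⟨ε, hε, hball⟩ := Metric.mem_nhds_iff.1 h1
  have h2 : (s + ε / 2) • u + y • v ∈ Ω := hball (by
    rw [mem_ball_zero_iff, Real.norm_eq_abs, abs_of_pos (by positivity)]; linarith)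
  have h3 := hD.inner_le_suppFn u h2
  rw [hf.inner_pt] at h3
  linarith

/-- A nonempty chord has length equal to the distance of its two end points, which belong to the
boundary of `Ω`. -/
lemma chord_measure (hD : Dom Ω) (hf : Frame u v) {s : ℝ} (hne : (chord Ω u v s).Nonempty) :
    volume.real (chord Ω u v s) = sSup (chord Ω u v s) - sInf (chord Ω u v s) ∧
    s • u + sSup (chord Ω u v s) • v ∈ frontier Ω ∧
    s • u + sInf (chord Ω u v s) • v ∈ frontier Ω := by
  set Y := chord Ω u v s with hY
  obtain ⟨B, hB⟩ := hD.bounded_chord hf s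
  have hba : BddAbove Y := bddAbove_Icc.mono hB
  have hbb : BddBelow Y := bddBelow_Icc.mono hB
  have hc : Continuous fun y : ℝ => s • u + y • v := by fun_prop
  have hYo : IsOpen Y := hD.opn.preimage hc
  have hYc : Convex ℝ Y := by
    intro y hy z hz p q hp hq hpq
    have : (p • y + q • z : ℝ) ∈ {y : ℝ | s • u + y • v ∈ Ω} := by
      have h1 := hD.conv (show s • u + y • v ∈ Ω from hy) (show s • u + z • v ∈ Ω from hz) hp hq hpq
      have e : s • u + (p • y + q • z) • v = p • (s • u + y • v) + q • (s • u + z • v) := by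
        obtain rfl : q = 1 - p := by linarith
        simp only [smul_eq_mul]; module
      rw [mem_ofPred_eq, e]; exact h1
    exact this
  have hYconn : IsConnected Y := ⟨hne, hYc.isPreconnected⟩
  have hle : sInf Y ≤ sSup Y := csInf_le_csSup hne hbb hba
  have hsub := hYconn.Ioo_csInf_csSup_subset hbb hba
  have hsub' := subset_Icc_csInf_csSup hbb hba
  refine ⟨le_antisymm ?_ ?_, ?_, ?_⟩
  · have := measureReal_mono (μ := volume) hsub' (by simp)
    rwa [Real.volume_real_Icc_of_le hle] at this
  · have := measureReal_mono (μ := volume) hsub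
      ((measure_mono hsub').trans_lt (by simp)).ne
    rwa [Real.volume_real_Ioo_of_le hle] at this
  · rw [hD.opn.frontier_eq]
    refine ⟨map_mem_closure (f := fun y : ℝ => s • u + y • v) hc (csSup_mem_closure hne hba) fun y hy => hy, fun hmem => ?_⟩
    obtain ⟨ε, hε, hball⟩ := Metric.isOpen_iff.1 hYo (sSup Y) hmem
    have : sSup Y + ε / 2 ∈ Y := hball (by
      rw [Metric.mem_ball, Real.dist_eq, add_sub_cancel_left, abs_of_pos (by positivity)]; linarith)
    linarith [le_csSup hba this]
  · rw [hD.opn.frontier_eq]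
    refine ⟨map_mem_closure (f := fun y : ℝ => s • u + y • v) hc (csInf_mem_closure hne hbb) fun y hy => hy, fun hmem => ?_⟩
    obtain ⟨ε, hε, hball⟩ := Metric.isOpen_iff.1 hYo (sInf Y) hmem
    have : sInf Y - ε / 2 ∈ Y := hball (by
      rw [Metric.mem_ball, Real.dist_eq, sub_sub_cancel_left, abs_neg, abs_of_pos (by positivity)]
      linarith)
    linarith [csInf_le hbb this]

lemma chord_le (hD : Dom Ω) (hf : Frame u v) {K : ℝ} (hK0 : 0 ≤ K)
    (hK : ∀ θ : E2, ‖θ‖ = 1 → ∀ δ : ℝ, 0 < δ → capDiam Ω θ δ ≤ K * √δ) (s : ℝ) :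
    volume.real (chord Ω u v s) ≤ K * √(suppFn Ω u - s) := by
  rcases (chord Ω u v s).eq_empty_or_nonempty with he | hne
  · rw [he, measureReal_empty]; positivity
  have hs : s < suppFn Ω u := by
    by_contra hc
    rw [hD.chord_eq_empty hf (not_lt.1 hc)] at hne
    exact Set.not_nonempty_empty hne
  obtain ⟨h1, h2, h3⟩ := hD.chord_measure hf hne
  rw [h1]
  refine le_trans ?_ (hK u hf.nu (suppFn Ω u - s) (by linarith))
  unfold capDiam
  have hb : Bornology.IsBounded {x ∈ frontier Ω | suppFn Ω u - (suppFn Ω u - s) ≤ ⟪x, u⟫} :=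
    (hD.bdd.closure.subset frontier_subset_closure).subset (sep_subset _ _)
  have := Metric.dist_le_diam_of_mem hb
    (x := s • u + sSup (chord Ω u v s) • v) (y := s • u + sInf (chord Ω u v s) • v)
    ⟨h2, by rw [hf.inner_pt]; linarith⟩ ⟨h3, by rw [hf.inner_pt]; linarith⟩
  refine le_trans (le_of_eq ?_) this
  rw [dist_add_left, dist_eq_norm, ← sub_smul, norm_smul, hf.nv, mul_one, Real.norm_of_nonneg]
  have hle := measureReal_nonneg (μ := volume) (s := chord Ω u v s)
  linarith

lemma chord_nonempty (hD : Dom Ω) (hf : Frame u v) {s : ℝ} (hs : s ∈ Ioo (-suppFn Ω (-u)) (suppFn Ω u)) :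
    (chord Ω u v s).Nonempty := by
  have hne : ∀ ξ : E2, ((fun x => ⟪x, ξ⟫) '' Ω).Nonempty := fun ξ => ⟨_, 0, hD.zero, rfl⟩
  obtain ⟨_, ⟨x, hx, rfl⟩, hxs⟩ := exists_lt_of_lt_csSup (hne u) hs.2
  obtain ⟨_, ⟨z, hz, rfl⟩, hzs⟩ := exists_lt_of_lt_csSup (b := -s) (hne (-u))
    (show -s < sSup _ from by have := hs.1; unfold suppFn at this; linarith)
  simp only [inner_neg_right] at hzs hxs
  -- the point of the segment from `z` to `x` on the line `⟨·, u⟩ = s`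
  set A := ⟪x, u⟫
  set B := ⟪z, u⟫
  have hAB : 0 < A - B := by linarith
  set p := (s - B) / (A - B) with hp
  set q := (A - s) / (A - B) with hq
  have hp0 : 0 ≤ p := div_nonneg (by linarith) hAB.le
  have hq0 : 0 ≤ q := div_nonneg (by linarith) hAB.le
  have hpq : p + q = 1 := by rw [hp, hq]; field_simp; ring
  have hw := hD.conv hx hz hp0 hq0 hpq
  refine ⟨⟪p • x + q • z, v⟫, ?_⟩
  have e : ⟪p • x + q • z, u⟫ = s := by
    rw [inner_add_left, inner_smul_left, inner_smul_left]
    change p * A + q * B = s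
    rw [hp, hq]; field_simp; ring
  show s • u + _ ∈ Ω
  rw [← e]
  rwa [← hf.expand]

lemma chord_concave (hD : Dom Ω) (hf : Frame u v) :
    ConcaveOn ℝ (Ioo (-suppFn Ω (-u)) (suppFn Ω u)) fun s => volume.real (chord Ω u v s) := by
  refine ⟨convex_Ioo _ _, fun s hs t ht p q hp hq hpq => ?_⟩
  have hst := (convex_Ioo (-suppFn Ω (-u)) (suppFn Ω u)) hs ht hp hq hpq
  have n1 := hD.chord_nonempty hf hs
  have n2 := hD.chord_nonempty hf ht
  have n3 := hD.chord_nonempty hf hst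
  simp only
  rw [(hD.chord_measure hf n1).1, (hD.chord_measure hf n2).1,
    (hD.chord_measure hf n3).1]
  obtain ⟨B1, hB1⟩ := hD.bounded_chord hf s
  obtain ⟨B2, hB2⟩ := hD.bounded_chord hf t
  obtain ⟨B3, hB3⟩ := hD.bounded_chord hf (p • s + q • t)
  have hsub : p • chord Ω u v s + q • chord Ω u v t ⊆ chord Ω u v (p • s + q • t) := by
    rintro _ ⟨_, ⟨y, hy, rfl⟩, _, ⟨z, hz, rfl⟩, rfl⟩
    have h1 := hD.conv (show s • u + y • v ∈ Ω from hy) (show t • u + z • v ∈ Ω from hz) hp hq hpq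
    have e : (p • s + q • t) • u + (p • y + q • z) • v
        = p • (s • u + y • v) + q • (t • u + z • v) := by
      simp only [smul_eq_mul]; module
    show (p • s + q • t) • u + (p • y + q • z) • v ∈ Ω
    rw [e]; exact h1
  have k1 : p • sSup (chord Ω u v s) + q • sSup (chord Ω u v t)
      ≤ sSup (chord Ω u v (p • s + q • t)) := by
    rw [← Real.sSup_smul_of_nonneg hp, ← Real.sSup_smul_of_nonneg hq, ← csSup_add n1.smul_set
      ((bddAbove_Icc.mono hB1).smul_of_nonneg hp) n2.smul_set
      ((bddAbove_Icc.mono hB2).smul_of_nonneg hq)]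
    exact csSup_le_csSup (bddAbove_Icc.mono hB3) (n1.smul_set.add n2.smul_set) hsub
  have k2 : sInf (chord Ω u v (p • s + q • t))
      ≤ p • sInf (chord Ω u v s) + q • sInf (chord Ω u v t) := by
    rw [← Real.sInf_smul_of_nonneg hp, ← Real.sInf_smul_of_nonneg hq, ← csInf_add n1.smul_set
      ((bddBelow_Icc.mono hB1).smul_of_nonneg hp) n2.smul_set
      ((bddBelow_Icc.mono hB2).smul_of_nonneg hq)]
    exact csInf_le_csInf (bddBelow_Icc.mono hB3) (n1.smul_set.add n2.smul_set) hsub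
  simp only [smul_eq_mul] at k1 k2 ⊢
  linarith

lemma measurable_chord (hD : Dom Ω) : Measurable fun s => volume.real (chord Ω u v s) := by
  have hm : MeasurableSet ((fun z : ℝ × ℝ => z.1 • u + z.2 • v) ⁻¹' Ω) :=
    (hD.opn.preimage (by fun_prop)).measurableSet
  exact (measurable_measure_prodMk_left (ν := volume) hm).ennreal_toReal

/-- The chord-length function of a body satisfying the cap condition. -/
lemma sliceFn_chord (hD : Dom Ω) (hf : Frame u v) {K : ℝ} (hK0 : 0 ≤ K)
    (hK : ∀ θ : E2, ‖θ‖ = 1 → ∀ δ : ℝ, 0 < δ → capDiam Ω θ δ ≤ K * √δ)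
    (hlt : -suppFn Ω (-u) < suppFn Ω u) :
    SliceFn (fun s => volume.real (chord Ω u v s)) (-suppFn Ω (-u)) (suppFn Ω u) K where
  lt := hlt
  K_nonneg := hK0
  nonneg _ := measureReal_nonneg
  meas := hD.measurable_chord
  left s := by
    have := hD.chord_le hf.neg hK0 hK (-s)
    rw [chord_neg] at this
    rwa [sub_neg_eq_add, add_comm, ← sub_neg_eq_add] at this
  right s := hD.chord_le hf hK0 hK s
  conc := hD.chord_concave hf

end Dom

/-! ### Passage to coordinates -/

/-- The point of the Euclidean plane with given coordinates. -/
def pt (x : ℝ × ℝ) : E2 := !₂[x.1, x.2]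

/-- `Ω` in coordinates; the product `ℝ × ℝ` carries the sup norm. -/
def coord (Ω : Set E2) : Set (ℝ × ℝ) := pt ⁻¹' Ω

lemma pt_add (x y : ℝ × ℝ) : pt (x + y) = pt x + pt y := by
  ext i; fin_cases i <;> simp [pt]

lemma pt_smul (c : ℝ) (x : ℝ × ℝ) : pt (c • x) = c • pt x := by
  ext i; fin_cases i <;> simp [pt]

lemma pt_neg (x : ℝ × ℝ) : pt (-x) = -pt x := by
  ext i; fin_cases i <;> simp [pt]

lemma pt_sub (x y : ℝ × ℝ) : pt (x - y) = pt x - pt y := by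
  ext i; fin_cases i <;> simp [pt]

lemma pt_zero : pt 0 = 0 := by
  ext i; fin_cases i <;> simp [pt]

lemma inner_pt (x y : ℝ × ℝ) : ⟪pt x, pt y⟫ = x.1 * y.1 + x.2 * y.2 := by
  simp [pt, PiLp.inner_apply, Fin.sum_univ_two]; ring

lemma norm_pt_sq (x : ℝ × ℝ) : ‖pt x‖ ^ 2 = x.1 ^ 2 + x.2 ^ 2 := by
  rw [← real_inner_self_eq_norm_sq, inner_pt]; ring

lemma norm_le_norm_pt (x : ℝ × ℝ) : ‖x‖ ≤ ‖pt x‖ := by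
  have h := norm_pt_sq x
  rw [Prod.norm_def]
  refine max_le ?_ ?_ <;> rw [Real.norm_eq_abs] <;>
    refine abs_le_of_sq_le_sq (by nlinarith [sq_nonneg x.1, sq_nonneg x.2]) (norm_nonneg _)

lemma norm_pt_le (x : ℝ × ℝ) : ‖pt x‖ ≤ 2 * ‖x‖ := by
  have h := norm_pt_sq x
  have h1 : |x.1| ≤ ‖x‖ := norm_fst_le x
  have h2 : |x.2| ≤ ‖x‖ := norm_snd_le x
  refine abs_le_of_sq_le_sq' ?_ (by positivity) |>.2
  have e1 : x.1 ^ 2 ≤ ‖x‖ ^ 2 := sq_le_sq' (by linarith [(abs_le.1 h1).1]) (abs_le.1 h1).2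
  have e2 : x.2 ^ 2 ≤ ‖x‖ ^ 2 := sq_le_sq' (by linarith [(abs_le.1 h2).1]) (abs_le.1 h2).2
  nlinarith

lemma continuous_pt : Continuous pt := by
  refine (LipschitzWith.of_dist_le_mul (K := 2) fun x y => ?_).continuous
  rw [dist_eq_norm, dist_eq_norm, ← pt_sub]; exact norm_pt_le _

lemma measurePreserving_pt : MeasurePreserving pt := by
  have h := ((volume_preserving_finTwoArrow ℝ).symm).trans
    ((EuclideanSpace.volume_preserving_symm_measurableEquiv_toLp (Fin 2)).symm)
  have e : pt = ⇑(MeasurableEquiv.finTwoArrow.symm.trans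
      (MeasurableEquiv.toLp 2 (Fin 2 → ℝ)).symm.symm) := by
    funext x; ext i; fin_cases i <;> rfl
  rw [e]; exact h

lemma frame_pt {a b : ℝ} (hab : a ^ 2 + b ^ 2 = 1) : Frame (pt (a, b)) (pt (-b, a)) where
  nu := by
    have h := norm_pt_sq (a, b)
    simp only [hab] at h
    exact (pow_eq_one_iff_of_nonneg (norm_nonneg _) two_ne_zero).1 h
  nv := by
    have h := norm_pt_sq (-b, a)
    simp only [neg_sq, add_comm (b ^ 2), hab] at h
    exact (pow_eq_one_iff_of_nonneg (norm_nonneg _) two_ne_zero).1 h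
  orth := by rw [inner_pt]; ring
  expand x := by
    have hx : x = pt (x 0, x 1) := by ext i; fin_cases i <;> simp [pt]
    rw [hx, inner_pt, inner_pt, ← pt_smul, ← pt_smul, ← pt_add]
    congr 1
    ext
    · simp only [Prod.fst_add, Prod.smul_fst, smul_eq_mul]
      linear_combination (-(x 0)) * hab
    · simp only [Prod.snd_add, Prod.smul_snd, smul_eq_mul]
      linear_combination (-(x 1)) * hab

/-- Rotation of the plane by the angle with cosine `a` and sine `b`. -/
def rot (a b : ℝ) (z : ℝ × ℝ) : ℝ × ℝ := (a * z.1 + -b * z.2, b * z.1 + a * z.2)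

lemma rot_props {a b : ℝ} (hab : a ^ 2 + b ^ 2 = 1) :
    MeasurePreserving (rot a b) ∧ MeasurableEmbedding (rot a b) := by
  have hc : Continuous (rot a b) := by unfold rot; fun_prop
  have hinj : Function.Injective (rot a b) := by
    intro z w h
    simp only [rot, Prod.mk.injEq] at h
    ext
    · linear_combination a * h.1 + b * h.2 - (z.1 - w.1) * hab
    · linear_combination (-b) * h.1 + a * h.2 - (z.2 - w.2) * hab
  refine ⟨⟨hc.measurable, ?_⟩, hc.measurableEmbedding hinj⟩
  set L := Matrix.toLin (Module.Basis.finTwoProd ℝ) (Module.Basis.finTwoProd ℝ) !![a, -b; b, a]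
  have hL : ⇑L = rot a b := by
    funext z
    exact Matrix.toLin_finTwoProd_apply a (-b) b a z
  have hdet : LinearMap.det L = 1 := by
    rw [LinearMap.det_toLin, Matrix.det_fin_two_of]; linarith
  have := Measure.map_linearMap_addHaar_eq_smul_addHaar (volume : Measure (ℝ × ℝ)) (f := L)
    (by rw [hdet]; exact one_ne_zero)
  rw [hL, hdet] at this
  simpa using this

lemma latticeCount_eq (Ω : Set E2) {t : ℝ} (ht : 0 < t) :
    latticeCount (t • Ω) = cnt (coord Ω) t := by
  unfold latticeCount cnt
  refine Nat.card_congr ((finTwoArrowEquiv ℤ).subtypeEquiv fun k => ?_)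
  have e : ek k = pt (toP (finTwoArrowEquiv ℤ k)) := by
    ext i; fin_cases i <;> simp [ek, pt, toP]
  rw [mem_ofPred_eq, mem_ofPred_eq, e, mem_smul_set_iff_inv_smul_mem₀ ht.ne',
    mem_smul_set_iff_inv_smul_mem₀ ht.ne', coord, mem_preimage, pt_smul]

namespace Dom
variable {Ω : Set E2}

lemma body (hD : Dom Ω) : ∃ r, Body (coord Ω) r := by
  have ho : IsOpen (coord Ω) := hD.opn.preimage continuous_pt
  obtain ⟨r, hr, hball⟩ := Metric.isOpen_iff.1 ho 0 (show pt 0 ∈ Ω by rw [pt_zero]; exact hD.zero)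
  refine ⟨r, ?_, ho, ?_, hr, hball⟩
  · intro x hx y hy p q hp hq hpq
    have := hD.conv hx hy hp hq hpq
    rwa [← pt_smul, ← pt_smul, ← pt_add] at this
  · obtain ⟨B, hB⟩ := hD.bdd.subset_closedBall 0
    refine (Metric.isBounded_closedBall (x := (0 : ℝ × ℝ)) (r := B)).subset fun x hx => ?_
    have := hB hx
    rw [mem_closedBall_zero_iff] at this ⊢
    exact (norm_le_norm_pt x).trans this

lemma volume_coord (hD : Dom Ω) : volume.real (coord Ω) = (volume Ω).toReal := by
  unfold coord Measure.real
  rw [measurePreserving_pt.measure_preimage hD.opn.measurableSet.nullMeasurableSet]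

lemma latticeRest_eq (hD : Dom Ω) {t : ℝ} (ht : 0 < t) :
    latticeRest Ω t = cnt (coord Ω) t - t ^ 2 * volume.real (coord Ω) := by
  unfold latticeRest
  rw [latticeCount_eq Ω ht, hD.volume_coord]

lemma normLike (hD : Dom Ω) {r : ℝ} (hb : Body (coord Ω) r) :
    ∃ B, NormLike (fun x => suppFn Ω (pt x)) (r / 2) B := by
  obtain ⟨B, hB⟩ := hD.bdd.subset_closedBall 0
  have hr := hb.r_pos
  have hB0 : 0 ≤ B := by
    have := hB hD.zero
    rwa [mem_closedBall_zero_iff, norm_zero] at this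
  have hne : ∀ ξ : E2, ((fun x => ⟪x, ξ⟫) '' Ω).Nonempty := fun ξ => ⟨_, 0, hD.zero, rfl⟩
  have hle : ∀ x y : ℝ × ℝ, suppFn Ω (pt x) ≤ suppFn Ω (pt y) + B * 2 * ‖x - y‖ := by
    intro x y
    refine csSup_le (hne _) ?_
    rintro _ ⟨z, hz, rfl⟩
    have h1 := hD.inner_le_suppFn (pt y) hz
    have h2 := real_inner_le_norm z (pt (x - y))
    have h3 := hB hz
    rw [mem_closedBall_zero_iff] at h3
    have h4 := norm_pt_le (x - y)
    have h5 : ‖z‖ * ‖pt (x - y)‖ ≤ B * (2 * ‖x - y‖) := by gcongr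
    rw [pt_sub, inner_sub_right] at h2
    rw [pt_sub] at h5
    simp only
    linarith
  refine ⟨B * 2, ⟨by positivity, by positivity, ?_, ?_, ?_⟩⟩
  · intro c hc x
    unfold suppFn
    rw [pt_smul, ← smul_eq_mul, ← Real.sSup_smul_of_nonneg hc.le]
    congr 1
    ext w
    simp only [mem_image, mem_smul_set, inner_smul_right, smul_eq_mul]
    constructor
    · rintro ⟨z, hz, rfl⟩; exact ⟨_, ⟨z, hz, rfl⟩, rfl⟩
    · rintro ⟨_, ⟨z, hz, rfl⟩, rfl⟩; exact ⟨z, hz, rfl⟩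
  · intro x y
    have h1 := hle x y
    have h2 := hle y x
    rw [norm_sub_rev] at h2
    rw [abs_le]; constructor <;> linarith
  · intro x
    rcases eq_or_ne x 0 with rfl | hx
    · rw [norm_zero, mul_zero]
      have := hD.inner_le_suppFn (pt 0) hD.zero
      simpa using this
    · have hn : 0 < ‖x‖ := norm_pos_iff.2 hx
      -- test the support function on the point `r x / (2‖x‖)` of `Ω`
      have hz : (r / (2 * ‖x‖)) • x ∈ coord Ω := hb.ball (by
        rw [mem_ball_zero_iff, norm_smul, Real.norm_of_nonneg (by positivity)]
        field_simp; linarith)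
      have h1 := hD.inner_le_suppFn (pt x) (show pt _ ∈ Ω from hz)
      rw [pt_smul, inner_smul_left, real_inner_self_eq_norm_sq] at h1
      have h2 := norm_le_norm_pt x
      have h3 : ‖x‖ ^ 2 ≤ ‖pt x‖ ^ 2 := by gcongr
      refine le_trans ?_ h1
      simp only [conj_trivial]
      calc r / 2 * ‖x‖ = r / (2 * ‖x‖) * ‖x‖ ^ 2 := by field_simp
        _ ≤ _ := by gcongr

/-- Fubini along the direction of `k`: the Fourier transform of the indicator function of `Ω` is
the one-dimensional Fourier transform of the chord-length function. -/
lemma FI_eq {r : ℝ} (hb : Body (coord Ω) r) {a b N : ℝ} (hab : a ^ 2 + b ^ 2 = 1)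
    {k : ℤ × ℤ} (hk : toP k = N • (a, b)) (t : ℝ) :
    FI (coord Ω) k t
      = ∫ s, (volume.real (chord Ω (pt (a, b)) (pt (-b, a)) s) : ℂ) * ee (t * N * s) := by
  obtain ⟨hmp, hemb⟩ := rot_props hab
  set D' := rot a b ⁻¹' coord Ω with hD'
  have hD'm : MeasurableSet D' := hmp.measurable hb.opn.measurableSet
  have hD'v : volume D' ≠ ⊤ := by
    rw [hmp.measure_preimage hb.opn.measurableSet.nullMeasurableSet]; exact hb.volume_ne_top
  have hchord : ∀ s, Prod.mk s ⁻¹' D' = chord Ω (pt (a, b)) (pt (-b, a)) s := by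
    intro s
    ext y
    simp only [hD', mem_preimage, coord, chord, mem_ofPred_eq, ← pt_smul, ← pt_add, rot]
    have : ((a * s + -b * y, b * s + a * y) : ℝ × ℝ) = s • (a, b) + y • (-b, a) := by
      ext <;> simp <;> ring
    rw [this]
  simp only [toP, Prod.smul_mk, smul_eq_mul, Prod.mk.injEq] at hk
  have hpair : ∀ z, pair k (rot a b z) = N * z.1 := by
    intro z
    simp only [pair, rot, hk.1, hk.2]
    linear_combination N * z.1 * hab
  unfold FI
  rw [← hmp.setIntegral_preimage_emb hemb]
  simp_rw [hpair]
  rw [← integral_indicator hD'm, Measure.volume_eq_prod, integral_prod]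
  · congr 1; funext s
    have : (fun y => D'.indicator (fun z : ℝ × ℝ => ee (t * (N * z.1))) (s, y))
        = (chord Ω (pt (a, b)) (pt (-b, a)) s).indicator fun _ => ee (t * N * s) := by
      funext y
      rw [← hchord, mul_assoc]
      by_cases hy : (s, y) ∈ D'
      · rw [indicator_of_mem hy, indicator_of_mem (show y ∈ Prod.mk s ⁻¹' D' from hy)]
      · rw [indicator_of_notMem hy, indicator_of_notMem (show y ∉ Prod.mk s ⁻¹' D' from hy)]
    rw [this, integral_indicator, setIntegral_const, Complex.real_smul]
    rw [← hchord]; exact measurable_prodMk_left hD'm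
  · rw [← Measure.volume_eq_prod, integrable_indicator_iff hD'm]
    refine Measure.integrableOn_of_bounded (M := 1) hD'v ?_ ?_
    · exact (continuous_ee.comp (by fun_prop)).aestronglyMeasurable
    · exact Filter.Eventually.of_forall fun x => (norm_ee _).le

end Dom

lemma NormLike.comp_neg {ρ : ℝ × ℝ → ℝ} {r B : ℝ} (h : NormLike ρ r B) :
    NormLike (fun x => ρ (-x)) r B where
  r_pos := h.r_pos
  B_nonneg := h.B_nonneg
  hom c hc x := by rw [← smul_neg, h.hom c hc]
  lip x y := by
    refine (h.lip _ _).trans (le_of_eq ?_)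
    rw [neg_sub_neg, norm_sub_rev]
  lower x := by
    have := h.lower (-x)
    rwa [norm_neg] at this

/-! ### Decomposition of the Fourier transform of the domain -/

lemma Packet.mono {U : ℝ → ℂ} {τ M M' w : ℝ} (h : Packet U τ M w) (hM : M ≤ M') :
    Packet U τ M' w := by
  obtain ⟨q, c, h1, h2, h3, h4⟩ := h
  exact ⟨q, c, h1, h2.trans hM, h3, h4⟩

lemma Packet.const_mul {U : ℝ → ℂ} {τ M w p : ℝ} (h : Packet U τ M w) (hp : 0 ≤ p) :
    Packet (fun t => (p : ℂ) * U t) τ (p * M) w := by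
  obtain ⟨q, c, h1, h2, h3, h4⟩ := h
  refine ⟨fun s => p * q s, c, h1.const_mul p, ?_, fun s hs => h3 s (right_ne_zero_of_mul hs),
    fun t => ?_⟩
  · simp only [abs_mul, abs_of_nonneg hp]
    rw [integral_const_mul]
    gcongr
  · beta_reduce
    rw [h4, ← integral_const_mul]
    congr 1; funext s; push_cast; ring

/-- Restricting an integrable function to a set on which `c s` stays close to `τ` gives a packet. -/
lemma packet_indicator {g : ℝ → ℝ} (hg : Integrable g) {A : Set ℝ} (hA : MeasurableSet A)
    {c τ M w : ℝ} (hM : ∫ s in A, |g s| ≤ M) (hw : ∀ s ∈ A, g s ≠ 0 → |c * s - τ| ≤ w) :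
    Packet (fun t => ∫ s in A, (g s : ℂ) * ee (t * (c * s))) τ M w := by
  refine ⟨A.indicator g, c, hg.indicator hA, ?_, fun s hs => ?_, fun t => ?_⟩
  · rw [← integral_indicator hA] at hM
    refine le_trans (le_of_eq ?_) hM
    congr 1; funext s
    by_cases h : s ∈ A <;> simp [h]
  · have h := mem_of_indicator_ne_zero hs
    rw [indicator_of_mem h] at hs
    exact hw s h hs
  · beta_reduce
    rw [← integral_indicator hA]
    congr 1; funext s
    by_cases h : s ∈ A <;> simp [h]

/-- The Fourier transform of a slice function, times `4 sin²(πλη)`, splits into two packets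
coming from the endpoints of the support and a small contribution of the middle part. -/
lemma SliceFn.decomp {f : ℝ → ℝ} {α β K : ℝ} (h : SliceFn f α β K) {η d N : ℝ} (hN : 0 < N)
    (hη : 0 < η) (hd : 2 * η ≤ d) (hd2 : 2 * d ≤ β - α) :
    ∃ U V W : ℝ → ℂ, Packet U (N * β) (20 * K * (η * √η)) (N * d) ∧
      Packet V (N * α) (20 * K * (η * √η)) (N * d) ∧
      (∃ w, Packet W 0 (4 * K * η ^ 2 / √d) w) ∧
      ∀ t, ((4 * Real.sin (Real.pi * (t * N * η)) ^ 2 : ℝ) : ℂ) * ∫ s, (f s : ℂ) * ee (t * N * s)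
        = U t + V t + W t := by
  have hInt := h.secDiff_integrable η
  refine ⟨_, _, _, packet_indicator hInt measurableSet_Ioi (c := N) (h.near_right hη hd hd2) ?_,
    packet_indicator hInt measurableSet_Iio (c := N) (h.near_left hη hd hd2) ?_,
    ⟨N * (|α| + |β|), packet_indicator hInt measurableSet_Icc (c := N) (h.far hη hd hd2) ?_⟩, ?_⟩
  · intro s hs hne
    have h1 : s < β + η := by
      by_contra hc
      exact hne (h.secDiff_zero_right hη (not_lt.1 hc))
    rw [← mul_sub, abs_mul, abs_of_pos hN]
    have hs' : β - d < s := hs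
    have : |s - β| ≤ d := abs_le.2 ⟨by linarith, by linarith⟩
    gcongr
  · intro s hs hne
    have h1 : α - η < s := by
      by_contra hc
      exact hne (h.secDiff_zero_left hη (not_lt.1 hc))
    rw [← mul_sub, abs_mul, abs_of_pos hN]
    have hs' : s < α + d := hs
    have : |s - α| ≤ d := abs_le.2 ⟨by linarith, by linarith⟩
    gcongr
  · intro s hs _
    rw [sub_zero, abs_mul, abs_of_pos hN]
    have : |s| ≤ |α| + |β| := by
      have h1 := neg_abs_le α
      have h2 := le_abs_self β
      have h3 := abs_nonneg α
      have h4 := abs_nonneg β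
      exact abs_le.2 ⟨by linarith [hs.1], by linarith [hs.2]⟩
    gcongr
  · intro t
    rw [← h.fourier_secDiff]
    have hi := integrable_mul_ee' hInt t N
    simp only [mul_assoc] at hi ⊢
    have e : (Iio (α + d))ᶜ = Icc (α + d) (β - d) ∪ Ioi (β - d) := by
      rw [compl_Iio, Icc_union_Ioi_eq_Ici (by linarith)]
    have hdis : Disjoint (Icc (α + d) (β - d)) (Ioi (β - d)) := by
      rw [Set.disjoint_left]; intro s hs hs2
      exact absurd hs.2 (not_le.2 hs2)
    rw [← integral_add_compl (measurableSet_Iio (a := α + d)) hi, e,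
      setIntegral_union hdis measurableSet_Ioi hi.integrableOn hi.integrableOn]
    ring

/-- The decomposition for a single frequency `k`.  The packets are centred at the values
`ρ*(k)` and `-ρ*(-k)` of the support function. -/
lemma Dom.decomp {Ω : Set E2} (hD : Dom Ω) {r K κ R B : ℝ} (hb : Body (coord Ω) r) (hK0 : 0 ≤ K)
    (hK : ∀ θ : E2, ‖θ‖ = 1 → ∀ δ : ℝ, 0 < δ → capDiam Ω θ δ ≤ K * √δ)
    (hn : NormLike (fun x => suppFn Ω (pt x)) (r / 2) B)
    (hκ : 0 < κ) (hκr : κ ≤ r / 8) (hκ1 : κ ≤ 1 / 8) (hR : 1 ≤ R) {k : ℤ × ℤ} (hk : k ≠ 0) :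
    ∃ U V W : ℝ → ℂ,
      Packet U (suppFn Ω (pt (toP k))) (20 * K / (R * √R) * ((nn k : ℝ) * √(nn k : ℝ))⁻¹) (r / 4) ∧
      Packet V (-suppFn Ω (pt (-toP k))) (20 * K / (R * √R) * ((nn k : ℝ) * √(nn k : ℝ))⁻¹)
        (r / 4) ∧
      (∃ w, Packet W 0 (8 * K / √r / R ^ 2 * ((nn k : ℝ) * √(nn k : ℝ))⁻¹) w) ∧
      ∀ t, ((4 * Real.sin (Real.pi * (t * (κ / R))) ^ 2 : ℝ) : ℂ) * FI (coord Ω) k t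
        = U t + V t + W t := by
  have hr := hb.r_pos
  have hν1 : (1 : ℝ) ≤ nn k := by exact_mod_cast nn_pos hk
  set ν : ℝ := (nn k : ℝ) with hν
  set N := ‖pt (toP k)‖ with hN
  have hνN : ν ≤ N := by rw [hν, ← norm_toP]; exact norm_le_norm_pt _
  have hN0 : 0 < N := by linarith
  have hsq : (toP k).1 ^ 2 + (toP k).2 ^ 2 = N ^ 2 := (norm_pt_sq (toP k)).symm
  set a := (toP k).1 / N with ha
  set b := (toP k).2 / N with hbb
  have hab : a ^ 2 + b ^ 2 = 1 := by
    rw [ha, hbb, div_pow, div_pow, ← add_div, hsq, div_self (by positivity)]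
  have hkN : toP k = N • (a, b) := by
    ext <;> simp [ha, hbb] <;> field_simp
  have hf := frame_pt hab
  have hnab : 1 / 2 ≤ ‖(a, b)‖ := by
    have h1 := norm_pt_le (a, b)
    rw [hf.nu] at h1; linarith
  have hβ : r / 4 ≤ suppFn Ω (pt (a, b)) := by
    have : r / 2 * ‖(a, b)‖ ≤ suppFn Ω (pt (a, b)) := hn.lower (a, b)
    nlinarith
  have hα : r / 4 ≤ suppFn Ω (-pt (a, b)) := by
    have := hn.lower (-(a, b)); rw [norm_neg] at this; simp only [pt_neg] at this; nlinarith
  have hsl := hD.sliceFn_chord hf hK0 hK (by linarith)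
  have hρ : suppFn Ω (pt (toP k)) = N * suppFn Ω (pt (a, b)) := by
    rw [hkN]; exact hn.hom N hN0 (a, b)
  have hρ' : -suppFn Ω (pt (-toP k)) = N * -suppFn Ω (-pt (a, b)) := by
    rw [hkN, ← smul_neg, ← pt_neg, mul_neg]; congr 1; exact hn.hom N hN0 (-(a, b))
  have hR0 : 0 < R := by linarith
  set η := κ / (R * N) with hη
  set d := r / 4 / N with hd
  have hη0 : 0 < η := by positivity
  have h1 : 2 * η ≤ d := by
    rw [hη, hd, ← div_div, ← mul_div_assoc]
    gcongr
    have : κ / R ≤ κ := div_le_self hκ.le hR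
    linarith
  have h2 : d ≤ r / 4 := div_le_self (by positivity) (by linarith)
  have hNd : N * d = r / 4 := by rw [hd]; field_simp
  obtain ⟨U, V, W, hU, hV, ⟨w, hW⟩, hsum⟩ := hsl.decomp hN0 hη0 h1 (by linarith)
  have hηle : η ≤ 1 / (R * ν) := by
    rw [hη]; gcongr; linarith
  have hm1 : 20 * K * (η * √η) ≤ 20 * K / (R * √R) * (ν * √ν)⁻¹ := by
    calc 20 * K * (η * √η) ≤ 20 * K * (1 / (R * ν) * √(1 / (R * ν))) := by gcongr
      _ = _ := by
        rw [Real.sqrt_div' _ (by positivity), Real.sqrt_mul hR0.le, Real.sqrt_one]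
        field_simp
  have hm2 : 4 * K * η ^ 2 / √d ≤ 8 * K / √r / R ^ 2 * (ν * √ν)⁻¹ := by
    have e : √d = √r / (2 * √N) := by
      rw [hd, Real.sqrt_div' _ hN0.le, Real.sqrt_div' _ (by norm_num),
        show (4 : ℝ) = 2 ^ 2 by norm_num, Real.sqrt_sq (by norm_num)]
      field_simp
    have hsN : √N * √N = N := Real.mul_self_sqrt hN0.le
    have hsN0 : 0 < √N := Real.sqrt_pos.2 hN0
    calc 4 * K * η ^ 2 / √d = 8 * K / √r / R ^ 2 * κ ^ 2 * (N * √N)⁻¹ := by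
          rw [e, hη]; field_simp; rw [Real.sq_sqrt hN0.le]; ring
      _ ≤ 8 * K / √r / R ^ 2 * 1 * (ν * √ν)⁻¹ := by
          gcongr
          nlinarith
      _ = _ := by ring
  refine ⟨U, V, W, ?_, ?_, ⟨w, hW.mono hm2⟩, fun t => ?_⟩
  · rw [hρ, ← hNd]; exact hU.mono hm1
  · rw [hρ', ← hNd]; exact hV.mono hm1
  · rw [← hsum, FI_eq hb hab hkN]
    congr 5
    rw [hη]; field_simp

lemma Body.continuous_FI {D : Set (ℝ × ℝ)} {r : ℝ} (h : Body D r) (k : ℤ × ℤ) :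
    Continuous (FI D k) := by
  have hfin : IsFiniteMeasure (volume.restrict D) := ⟨by
    rw [Measure.restrict_apply_univ]; exact h.volume_ne_top.lt_top⟩
  unfold FI
  refine continuous_of_dominated (bound := fun _ => (1 : ℝ)) (fun t => ?_) (fun t => ?_)
    (integrable_const _) ?_
  · exact (continuous_ee.comp (continuous_const.mul (continuous_pair k))).aestronglyMeasurable
  · exact Filter.Eventually.of_forall fun s => (norm_ee _).le
  · exact Filter.Eventually.of_forall fun s => continuous_ee.comp (by fun_prop)

lemma Body.continuous_trunc {D : Set (ℝ × ℝ)} {r : ℝ} (h : Body D r) (ε : ℝ)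
    (S : Finset (ℤ × ℤ)) : Continuous (trunc D ε S) := by
  unfold trunc
  have := h.continuous_FI
  fun_prop

/-! ### The mean square estimate -/

lemma half_le_log {R : ℝ} (hR : 2 ≤ R) : 1 / 2 ≤ Real.log R := by
  have := Real.log_le_log (by norm_num) hR
  linarith [Real.log_two_gt_d9]

lemma sq_add_three_le (x y z : ℝ) : (x + y + z) ^ 2 ≤ 3 * (x ^ 2 + y ^ 2 + z ^ 2) := by
  nlinarith [sq_nonneg (x - y), sq_nonneg (x - z), sq_nonneg (y - z)]

/-- For `t` between `R / 2` and `3R` the multiplier `4 sin² (πκt/R)` is at least `4κ²`. -/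
lemma le_sin_of_window {κ R t : ℝ} (hκ : 0 < κ) (hκ1 : κ ≤ 1 / 8) (hR : 0 < R) (h1 : R / 2 ≤ t)
    (h2 : t ≤ 3 * R) : κ ≤ Real.sin (Real.pi * (t * (κ / R))) := by
  have hπ := Real.pi_pos
  have ht1 : κ / 2 ≤ t * (κ / R) := by
    rw [← mul_div_assoc, div_le_div_iff₀ (by norm_num) hR]
    nlinarith
  have ht2 : t * (κ / R) ≤ 1 / 2 := by
    rw [← mul_div_assoc, div_le_div_iff₀ hR (by norm_num)]
    nlinarith
  have := Real.mul_le_sin (x := Real.pi * (t * (κ / R))) (mul_nonneg hπ.le (by linarith))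
    (by nlinarith)
  have e : 2 / Real.pi * (Real.pi * (t * (κ / R))) = 2 * (t * (κ / R)) := by field_simp
  linarith

/-- Almost orthogonality applied to one of the two families of boundary packets. -/
lemma near_bound {ρ : ℝ × ℝ → ℝ} {r B : ℝ} (hn : NormLike ρ r B) {w : ℝ} (hw : 0 ≤ w) :
    ∃ C, 0 ≤ C ∧ ∀ (σ : ℝ) (S : Finset (ℤ × ℤ)) (U : ℤ × ℤ → ℝ → ℂ) (p : ℤ × ℤ → ℝ) (m M : ℝ),
      |σ| = 1 → 1 ≤ M → (∀ k ∈ S, k ≠ 0) → (∀ k ∈ S, 0 ≤ p k ∧ p k ≤ cut M (nn k)) →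
      (∀ k ∈ S, Packet (U k) (σ * ρ (toP k)) (m * ((nn k : ℝ) * √(nn k : ℝ))⁻¹) w) → ∀ a,
      ∫ t in a..(a + 1), ‖∑ k ∈ S, (p k : ℂ) * U k t‖ ^ 2 ≤ C * m ^ 2 * (3 + Real.log M) := by
  obtain ⟨C, hC, hrow⟩ := hn.row_sum
  have hB := hn.B_nonneg
  refine ⟨Real.exp Real.pi * (8 * (1 + 2 * w) ^ 4) * (C * (B + 1)) * 8, by positivity, ?_⟩
  intro σ S U p m M hσ hM hS hp hU a
  have h := packet_sum S (fun k t => (p k : ℂ) * U k t) (fun k => σ * ρ (toP k))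
    (fun k => p k * (m * ((nn k : ℝ) * √(nn k : ℝ))⁻¹)) (fun k => C * (ρ (toP k) + 1)) hw
    (fun k hk => (hU k hk).const_mul (hp k hk).1) (fun k hk => ?_) a
  · refine h.trans ?_
    have hρ0 : ρ 0 ≤ 0 := by
      have := hn.hom 2 (by norm_num) 0
      rw [smul_zero] at this; linarith
    have hterm : ∀ k ∈ S, (p k * (m * ((nn k : ℝ) * √(nn k : ℝ))⁻¹)) ^ 2 * (C * (ρ (toP k) + 1))
        ≤ C * (B + 1) * m ^ 2 * (((nn k : ℝ) ^ 2)⁻¹ * cut M (nn k)) := by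
      intro k hk
      obtain ⟨hp0, hp1⟩ := hp k hk
      have hν : (1 : ℝ) ≤ nn k := by exact_mod_cast nn_pos (hS k hk)
      set ν : ℝ := (nn k : ℝ) with hνd
      have hρ : ρ (toP k) + 1 ≤ (B + 1) * ν := by
        have := hn.lip (toP k) 0
        rw [sub_zero, norm_toP] at this
        have := (abs_le.1 this).2
        nlinarith
      have hp2 : p k ^ 2 ≤ cut M (nn k) := by
        have : cut M (nn k) ≤ 1 := min_le_left _ _
        nlinarith
      calc (p k * (m * (ν * √ν)⁻¹)) ^ 2 * (C * (ρ (toP k) + 1))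
          ≤ (p k * (m * (ν * √ν)⁻¹)) ^ 2 * (C * ((B + 1) * ν)) := by gcongr
        _ = C * (B + 1) * m ^ 2 * ((ν ^ 2)⁻¹ * p k ^ 2) := by
            have : √ν ^ 2 = ν := Real.sq_sqrt (by linarith)
            have h0 : 0 < √ν := Real.sqrt_pos.2 (by linarith)
            rw [mul_pow, mul_pow, inv_pow, mul_pow, this]
            field_simp
        _ ≤ _ := by gcongr
    calc _ ≤ Real.exp Real.pi * (8 * (1 + 2 * w) ^ 4) *
          ∑ k ∈ S, C * (B + 1) * m ^ 2 * (((nn k : ℝ) ^ 2)⁻¹ * cut M (nn k)) := by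
            exact mul_le_mul_of_nonneg_left (Finset.sum_le_sum hterm) (by positivity)
      _ ≤ Real.exp Real.pi * (8 * (1 + 2 * w) ^ 4) *
          (C * (B + 1) * m ^ 2 * (8 * (3 + Real.log M))) := by
            rw [← Finset.mul_sum]; gcongr; exact sum_near hM S hS
      _ = _ := by ring
  · refine le_trans (le_of_eq ?_) (hrow S (ρ (toP k)) ?_)
    · refine Finset.sum_congr rfl fun l _ => ?_
      rw [← mul_sub, abs_mul, hσ, one_mul]
    · exact le_trans (mul_nonneg hn.r_pos.le (norm_nonneg _)) (hn.lower _)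

set_option maxHeartbeats 1000000 in
/-- The mean square of the smoothed lattice rest over a window of length one. -/
lemma Dom.window {Ω : Set E2} (hD : Dom Ω) {r K κ : ℝ} (hb : Body (coord Ω) r) (hK0 : 0 ≤ K)
    (hK : ∀ θ : E2, ‖θ‖ = 1 → ∀ δ : ℝ, 0 < δ → capDiam Ω θ δ ≤ K * √δ)
    (hκ : 0 < κ) (hκr : κ ≤ r / 8) (hκ1 : κ ≤ 1 / 8) :
    ∃ C, 0 ≤ C ∧ ∀ (R : ℝ) (S : Finset (ℤ × ℤ)) (a : ℝ), 2 ≤ R → (∀ k ∈ S, k ≠ 0) → R / 2 ≤ a →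
      a + 1 ≤ 3 * R →
      ∫ t in a..(a + 1), ‖Body.trunc (coord Ω) (κ / R) S t‖ ^ 2 ≤ C * (R * Real.log R) := by
  have hr := hb.r_pos
  obtain ⟨B, hn⟩ := hD.normLike hb
  obtain ⟨C₁, hC₁, hnear⟩ := near_bound hn (w := r / 4) (by positivity)
  obtain ⟨C₂, hC₂, hnear'⟩ := near_bound hn.comp_neg (w := r / 4) (by positivity)
  set L := 1 + 2 * (3 + Real.log (1 / κ)) with hL
  have hlogκ : 0 ≤ Real.log (1 / κ) := Real.log_nonneg (by rw [le_div_iff₀ hκ]; linarith)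
  refine ⟨3 * (9 / (4 * κ ^ 2)) ^ 2 * ((C₁ + C₂) * (20 * K) ^ 2 * L
    + 2 * ((8 * K / √r) ^ 2 * 32 ^ 2 / κ)), by positivity, ?_⟩
  intro R S a hR hS haR haR'
  have hR0 : 0 < R := by linarith
  have hlog := half_le_log hR
  choose! U V W hU hV hW hsum using fun k (hk : k ∈ S) =>
    hD.decomp hb hK0 hK hn hκ hκr hκ1 (by linarith : 1 ≤ R) (hS k hk)
  have hε : 0 < κ / R := by positivity
  have hM : 1 ≤ 1 / (κ / R) := by
    rw [one_div_div, le_div_iff₀ hκ]; linarith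
  have hp : ∀ k ∈ S, 0 ≤ pk (κ / R) k ∧ pk (κ / R) k ≤ cut (1 / (κ / R)) (nn k) :=
    fun k hk => ⟨pk_nonneg _ _, pk_le_cut hε (hS k hk)⟩
  have hlogM : 3 + Real.log (1 / (κ / R)) ≤ L * Real.log R := by
    rw [one_div_div, div_eq_mul_one_div, Real.log_mul hR0.ne' (by positivity), hL]
    nlinarith
  set m := 20 * K / (R * √R) with hm
  have hm2 : m ^ 2 = (20 * K) ^ 2 / R ^ 3 := by
    rw [hm, div_pow, mul_pow, mul_pow R, Real.sq_sqrt hR0.le]; ring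
  have i1 := hnear 1 S U (pk (κ / R)) m _ abs_one hM hS hp
    (fun k hk => by rw [one_mul]; exact hU k hk) a
  have i2 := hnear' (-1) S V (pk (κ / R)) m _ (by simp) hM hS hp
    (fun k hk => by rw [neg_one_mul]; exact hV k hk) a
  set u := fun t => ∑ k ∈ S, (pk (κ / R) k : ℂ) * U k t with hu
  set v := fun t => ∑ k ∈ S, (pk (κ / R) k : ℂ) * V k t with hv
  set x := fun t => ∑ k ∈ S, (pk (κ / R) k : ℂ) * W k t with hx
  have hcu : Continuous u := continuous_finsetSum _ fun k hk =>
    continuous_const.mul (hU k hk).continuous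
  have hcv : Continuous v := continuous_finsetSum _ fun k hk =>
    continuous_const.mul (hV k hk).continuous
  have hxle : ∀ t, ‖x t‖ ^ 2 ≤ (8 * K / √r) ^ 2 * 32 ^ 2 / κ / R ^ 3 := by
    intro t
    have h1 : ‖x t‖ ≤ 8 * K / √r / R ^ 2 * (32 * √(1 / (κ / R))) := by
      calc ‖x t‖ ≤ ∑ k ∈ S, 8 * K / √r / R ^ 2 *
            (((nn k : ℝ) * √(nn k : ℝ))⁻¹ * cut (1 / (κ / R)) (nn k)) := by
            refine (norm_sum_le _ _).trans (Finset.sum_le_sum fun k hk => ?_)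
            obtain ⟨w, hw⟩ := hW k hk
            rw [norm_mul, Complex.norm_real, Real.norm_of_nonneg (hp k hk).1]
            calc _ ≤ cut (1 / (κ / R)) (nn k) *
                  (8 * K / √r / R ^ 2 * ((nn k : ℝ) * √(nn k : ℝ))⁻¹) := by
                  gcongr
                  · exact cut_nonneg _ _
                  · exact (hp k hk).2
                  · exact hw.norm_le t
              _ = _ := by ring
        _ ≤ _ := by
            rw [← Finset.mul_sum]; gcongr; exact sum_far hM S hS
    calc ‖x t‖ ^ 2 ≤ (8 * K / √r / R ^ 2 * (32 * √(1 / (κ / R)))) ^ 2 := by gcongr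
      _ = _ := by
        rw [mul_pow, mul_pow 32, Real.sq_sqrt (by positivity), div_pow (8 * K / √r)]
        field_simp
  -- on the window the factor `t² / (4 sin² (πκt/R))` is at most `9R² / (4κ²)`
  have hpt : ∀ t ∈ Icc a (a + 1), ‖Body.trunc (coord Ω) (κ / R) S t‖ ^ 2 ≤
      3 * (9 / (4 * κ ^ 2)) ^ 2 * R ^ 4 * (‖u t‖ ^ 2 + ‖v t‖ ^ 2
        + (8 * K / √r) ^ 2 * 32 ^ 2 / κ / R ^ 3) := by
    intro t ht
    have hsin := le_sin_of_window hκ hκ1 hR0 (haR.trans ht.1) (ht.2.trans haR')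
    set s2 := 4 * Real.sin (Real.pi * (t * (κ / R))) ^ 2 with hs2
    have hs2le : 4 * κ ^ 2 ≤ s2 := by rw [hs2]; gcongr
    have hs2pos : 0 < s2 := by nlinarith [pow_pos hκ 2]
    have heq : (s2 : ℂ) * Body.trunc (coord Ω) (κ / R) S t
        = ((t ^ 2 : ℝ) : ℂ) * (u t + v t + x t) := by
      simp only [Body.trunc, hu, hv, hx, ← Finset.sum_add_distrib, Finset.mul_sum]
      refine Finset.sum_congr rfl fun k hk => ?_
      have := hsum k hk t
      rw [← hs2] at this
      linear_combination (pk (κ / R) k : ℂ) * ((t ^ 2 : ℝ) : ℂ) * this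
    have hnorm := congrArg norm heq
    rw [norm_mul, norm_mul, Complex.norm_real, Complex.norm_real, Real.norm_of_nonneg hs2pos.le,
      Real.norm_of_nonneg (sq_nonneg t)] at hnorm
    set y := ‖Body.trunc (coord Ω) (κ / R) S t‖ with hy
    have hyle : y ≤ 9 / (4 * κ ^ 2) * R ^ 2 * ‖u t + v t + x t‖ := by
      have h1 : 4 * κ ^ 2 * y ≤ t ^ 2 * ‖u t + v t + x t‖ := by
        rw [← hnorm]; gcongr
      have h2 : t ^ 2 ≤ 9 * R ^ 2 := by
        calc t ^ 2 ≤ (3 * R) ^ 2 := by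
              have : 0 ≤ t := by linarith [ht.1]
              gcongr; linarith [ht.2]
          _ = _ := by ring
      have h3 : 4 * κ ^ 2 * y ≤ 9 * R ^ 2 * ‖u t + v t + x t‖ := h1.trans (by gcongr)
      rw [div_mul_eq_mul_div, div_mul_eq_mul_div, le_div_iff₀ (by positivity)]
      linarith
    have htri : ‖u t + v t + x t‖ ^ 2 ≤ 3 * (‖u t‖ ^ 2 + ‖v t‖ ^ 2 + ‖x t‖ ^ 2) := by
      have h1 : ‖u t + v t + x t‖ ≤ ‖u t‖ + ‖v t‖ + ‖x t‖ := norm_add₃_le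
      have h2 : ‖u t + v t + x t‖ ^ 2 ≤ (‖u t‖ + ‖v t‖ + ‖x t‖) ^ 2 := by gcongr
      exact h2.trans (sq_add_three_le _ _ _)
    have hy0 : 0 ≤ y := norm_nonneg _
    calc y ^ 2 ≤ (9 / (4 * κ ^ 2) * R ^ 2 * ‖u t + v t + x t‖) ^ 2 := by gcongr
      _ = (9 / (4 * κ ^ 2)) ^ 2 * R ^ 4 * ‖u t + v t + x t‖ ^ 2 := by ring
      _ ≤ (9 / (4 * κ ^ 2)) ^ 2 * R ^ 4 * (3 * (‖u t‖ ^ 2 + ‖v t‖ ^ 2 + ‖x t‖ ^ 2)) := by gcongr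
      _ ≤ (9 / (4 * κ ^ 2)) ^ 2 * R ^ 4 * (3 * (‖u t‖ ^ 2 + ‖v t‖ ^ 2
            + (8 * K / √r) ^ 2 * 32 ^ 2 / κ / R ^ 3)) := by
          have := hxle t
          gcongr
      _ = _ := by ring
  have hInt : ∀ {g : ℝ → ℂ}, Continuous g →
      IntervalIntegrable (fun t => ‖g t‖ ^ 2) volume a (a + 1) :=
    fun hg => (hg.norm.pow 2).intervalIntegrable _ _
  have hmono := intervalIntegral.integral_mono_on (by linarith)
    (hInt (hb.continuous_trunc (κ / R) S))
    ((((hInt hcu).add (hInt hcv)).add (intervalIntegrable_const (μ := volume)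
      (c := (8 * K / √r) ^ 2 * 32 ^ 2 / κ / R ^ 3))).const_mul
      (3 * (9 / (4 * κ ^ 2)) ^ 2 * R ^ 4)) hpt
  refine hmono.trans ?_
  rw [intervalIntegral.integral_const_mul, intervalIntegral.integral_add
    ((hInt hcu).add (hInt hcv)) intervalIntegrable_const,
    intervalIntegral.integral_add (hInt hcu) (hInt hcv), intervalIntegral.integral_const,
    add_sub_cancel_left, one_smul]
  have hmL : m ^ 2 * (3 + Real.log (1 / (κ / R))) ≤ (20 * K) ^ 2 / R ^ 3 * (L * Real.log R) := by
    rw [hm2]; gcongr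
  have j1 : C₁ * m ^ 2 * (3 + Real.log (1 / (κ / R))) ≤
      C₁ * ((20 * K) ^ 2 / R ^ 3 * (L * Real.log R)) := by
    rw [mul_assoc]; gcongr
  have j2 : C₂ * m ^ 2 * (3 + Real.log (1 / (κ / R))) ≤
      C₂ * ((20 * K) ^ 2 / R ^ 3 * (L * Real.log R)) := by
    rw [mul_assoc]; gcongr
  have j3 : (8 * K / √r) ^ 2 * 32 ^ 2 / κ / R ^ 3 ≤
      (8 * K / √r) ^ 2 * 32 ^ 2 / κ / R ^ 3 * (2 * Real.log R) :=
    le_mul_of_one_le_right (by positivity) (by linarith)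
  calc _ ≤ 3 * (9 / (4 * κ ^ 2)) ^ 2 * R ^ 4 * (C₁ * ((20 * K) ^ 2 / R ^ 3 * (L * Real.log R))
        + C₂ * ((20 * K) ^ 2 / R ^ 3 * (L * Real.log R))
        + (8 * K / √r) ^ 2 * 32 ^ 2 / κ / R ^ 3 * (2 * Real.log R)) := by
        refine mul_le_mul_of_nonneg_left ?_ (by positivity)
        exact add_le_add (add_le_add (i1.trans j1) (i2.trans j2)) j3
    _ = _ := by field_simp

lemma integral_le_of_windows {F : ℝ → ℝ} (hF : Continuous F) (h0 : ∀ t, 0 ≤ F t) {X a h b : ℝ}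
    (hh : 0 ≤ h) (hb : a + h + 1 ≤ b) (hX : ∀ x, a ≤ x → x + 1 ≤ b → ∫ t in x..(x + 1), F t ≤ X) :
    ∫ t in a..(a + h), F t ≤ (h + 1) * X := by
  have hi : ∀ x y, IntervalIntegrable F volume x y := fun x y => hF.intervalIntegrable x y
  set n := ⌈h⌉₊ with hn
  have h1 : h ≤ n := Nat.le_ceil h
  have h2 : (n : ℝ) < h + 1 := Nat.ceil_lt_add_one hh
  have hX0 : 0 ≤ X := le_trans (intervalIntegral.integral_nonneg (by linarith) fun t _ => h0 t)
    (hX a le_rfl (by linarith))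
  have h3 : ∫ t in a..(a + h), F t ≤ ∫ t in a..(a + n), F t := by
    rw [← intervalIntegral.integral_add_adjacent_intervals (hi a (a + h)) (hi _ (a + n))]
    have := intervalIntegral.integral_nonneg (f := F) (μ := volume) (a := a + h) (b := a + n)
      (by linarith) fun t _ => h0 t
    linarith
  have h4 := intervalIntegral.sum_integral_adjacent_intervals (f := F) (μ := volume)
    (a := fun i : ℕ => a + i) (n := n) fun i _ => hi _ _
  simp only [Nat.cast_zero, add_zero] at h4
  rw [← h4] at h3
  refine h3.trans ?_
  calc _ ≤ ∑ i ∈ Finset.range n, X := by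
        refine Finset.sum_le_sum fun i hin => ?_
        have : (i : ℝ) + 1 ≤ n := by exact_mod_cast Finset.mem_range.1 hin
        push_cast
        rw [← add_assoc]
        exact hX _ (by have : (0 : ℝ) ≤ i := by positivity
                       linarith) (by linarith)
    _ = n * X := by simp
    _ ≤ _ := by gcongr

theorem Dom.main {Ω : Set E2} (hD : Dom Ω) (hcurv : CurvBddBelow Ω) :
    ∃ C : ℝ, ∀ R h : ℝ, 2 ≤ R → 1 ≤ h → h ≤ R →
      meanSquare Ω R h ≤ C * Real.sqrt (R * Real.log R) := by
  obtain ⟨K', hK'⟩ := hcurv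
  have hK : ∀ θ : E2, ‖θ‖ = 1 → ∀ δ : ℝ, 0 < δ → capDiam Ω θ δ ≤ max K' 0 * √δ :=
    fun θ hθ δ hδ => (hK' θ hθ δ hδ).trans (by gcongr; exact le_max_left _ _)
  obtain ⟨r, hb⟩ := hD.body
  have hr := hb.r_pos
  set κ := min r 1 / 8 with hκd
  have hκ : 0 < κ := by positivity
  have hκr : κ ≤ r / 8 := by rw [hκd]; gcongr; exact min_le_left _ _
  have hκ1 : κ ≤ 1 / 8 := by rw [hκd]; gcongr; exact min_le_right _ _
  obtain ⟨C, hC, hwin⟩ := hD.window hb (le_max_right K' 0) hK hκ hκr hκ1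
  set Q := 1 + volume.real (coord Ω) with hQ
  have hV : 0 ≤ volume.real (coord Ω) := measureReal_nonneg
  refine ⟨√(3 * (4 * C + Q ^ 2)), fun R h hR h1 hhR => ?_⟩
  have hR0 : 0 < R := by linarith
  have hlog := half_le_log hR
  have hRlog : 1 ≤ R * Real.log R := by nlinarith
  set ε := κ / R with hε
  have hε0 : 0 < ε := by positivity
  have hε1 : ε ≤ 1 / 2 := by rw [hε, div_le_div_iff₀ hR0 (by norm_num)]; linarith
  set c := ε / r with hc
  have hc0 : 0 < c := by positivity
  have hcR : c * R ≤ 1 / 8 := by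
    have : c * R = κ / r := by rw [hc, hε]; field_simp
    rw [this, div_le_div_iff₀ hr (by norm_num)]; linarith
  have hc1 : c ≤ 1 / 16 := by nlinarith
  obtain ⟨S, hS0, hS⟩ := hb.exists_trunc hε0 hε1 (3 * R)
  set F := fun t => ‖Body.trunc (coord Ω) ε S t‖ ^ 2 with hF
  have hFc : Continuous F := (hb.continuous_trunc ε S).norm.pow 2
  have hF0 : ∀ t, 0 ≤ F t := fun t => sq_nonneg _
  have hpt : ∀ t ∈ Ioc R (R + h), (latticeRest Ω t) ^ 2 ≤ 3 * (F (t + c) + F (t - c) + Q ^ 2) := by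
    intro t ht
    have hle := hb.rest_le hε0 hε1 hS (t := t) (by linarith [ht.1]) (by linarith [ht.2])
    rw [← hD.latticeRest_eq (by linarith [ht.1])] at hle
    have hq : 1 + c * (2 * t + c) * volume.real (coord Ω) ≤ Q := by
      have : c * (2 * t + c) ≤ 1 := by nlinarith [ht.2]
      rw [hQ]; nlinarith
    simp only [hF]
    set p := ‖Body.trunc (coord Ω) ε S (t + c)‖
    set q := ‖Body.trunc (coord Ω) ε S (t - c)‖
    have h2 : |latticeRest Ω t| ≤ p + q + Q := by linarith
    have h3 : (latticeRest Ω t) ^ 2 ≤ (p + q + Q) ^ 2 := by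
      rw [← sq_abs]; gcongr
    exact h3.trans (sq_add_three_le _ _ _)
  have hX : ∀ x, R / 2 ≤ x → x + 1 ≤ 3 * R → ∫ t in x..(x + 1), F t ≤ C * (R * Real.log R) :=
    fun x hx hx' => hwin R S x hR hS0 hx hx'
  have hplus : ∫ t in R..(R + h), F (t + c) ≤ (h + 1) * (C * (R * Real.log R)) := by
    rw [intervalIntegral.integral_comp_add_right (fun t => F t) c,
      show R + h + c = R + c + h by ring]
    exact integral_le_of_windows hFc hF0 (by linarith) (b := 3 * R) (by linarith)
      fun x hx hx' => hX x (by linarith) hx'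
  have hminus : ∫ t in R..(R + h), F (t - c) ≤ (h + 1) * (C * (R * Real.log R)) := by
    rw [intervalIntegral.integral_comp_sub_right (fun t => F t) c,
      show R + h - c = R - c + h by ring]
    exact integral_le_of_windows hFc hF0 (by linarith) (b := 3 * R) (by linarith)
      fun x hx hx' => hX x (by linarith) hx'
  have ip : IntervalIntegrable (fun t => F (t + c)) volume R (R + h) :=
    (hFc.comp (by fun_prop)).intervalIntegrable _ _
  have im : IntervalIntegrable (fun t => F (t - c)) volume R (R + h) :=
    (hFc.comp (by fun_prop)).intervalIntegrable _ _
  have hdom : IntervalIntegrable (fun t => 3 * (F (t + c) + F (t - c) + Q ^ 2)) volume R (R + h) :=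
    ((ip.add im).add intervalIntegrable_const).const_mul 3
  have hInt : ∫ t in R..(R + h), (latticeRest Ω t) ^ 2 ≤
      ∫ t in R..(R + h), 3 * (F (t + c) + F (t - c) + Q ^ 2) := by
    rw [intervalIntegral.integral_of_le (by linarith), intervalIntegral.integral_of_le (by linarith)]
    refine integral_mono_of_nonneg (Filter.Eventually.of_forall fun t => sq_nonneg _) hdom.1 ?_
    exact (ae_restrict_iff' measurableSet_Ioc).2 (Filter.Eventually.of_forall hpt)
  rw [intervalIntegral.integral_const_mul, intervalIntegral.integral_add (ip.add im)
    intervalIntegrable_const, intervalIntegral.integral_add ip im,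
    intervalIntegral.integral_const, add_sub_cancel_left, smul_eq_mul] at hInt
  unfold meanSquare
  rw [← Real.sqrt_mul (by positivity)]
  refine Real.sqrt_le_sqrt ?_
  have hh0 : 0 < h := by linarith
  rw [div_mul_eq_mul_div, one_mul, div_le_iff₀ hh0]
  have e1 : (h + 1) * (C * (R * Real.log R)) ≤ 2 * h * (C * (R * Real.log R)) := by
    gcongr; linarith
  have e2 : h * Q ^ 2 ≤ h * Q ^ 2 * (R * Real.log R) :=
    le_mul_of_one_le_right (by positivity) hRlog
  calc _ ≤ 3 * (2 * h * (C * (R * Real.log R)) + 2 * h * (C * (R * Real.log R))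
        + h * Q ^ 2 * (R * Real.log R)) := by linarith
    _ = _ := by ring

/-- Theorem 1.3: if `Ω` is a bounded open convex planar domain containing the
origin, with curvature bounded below in the generalized sense
`sup_{θ∈S¹} sup_{δ>0} δ^{-1/2} μ(θ,δ) < ∞`, then `𝒢_Ω(R,h) ≤ C_Ω (R log R)^{1/2}` for
`1 ≤ h ≤ R`, `R ≥ 2`. -/
theorem statement2 (Ω : Set E2) (hconv : Convex ℝ Ω) (hopen : IsOpen Ω)
    (hbdd : Bornology.IsBounded Ω) (h0 : (0 : E2) ∈ Ω) (hcurv : CurvBddBelow Ω) :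
    ∃ C : ℝ, ∀ R h : ℝ, 2 ≤ R → 1 ≤ h → h ≤ R →
      meanSquare Ω R h ≤ C * Real.sqrt (R * Real.log R) := by
  exact Dom.main ⟨hconv, hopen, hbdd, h0⟩ hcurv

end
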